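/- arXiv:1712.01167 — 4 statements merged into one kernel-verified Lean document; each statement's English description precedes it below -/
import Mathlib

section
/- Assume char k = 2. Let F be a nonzero homogeneous polynomial of degree 3 in k[x₀,x₁,x₂,x₃] such that the cubic surface V(F) is smooth, and suppose that for all distinct indices i, j, l the coefficient of the monomial xᵢxⱼx_l in F is 0. Then there exist A ∈ GL₄(k) and c ∈ kˣ such that F(A·x) = c·(x₀³ + x₁³ + x₂³ + x₃³); that is, V(F) is projectively equivalent to the Fermat cubic surface. -/
open MvPolynomial Matrix

/-- The polynomial `F(A·x)`, obtained from `F` by substituting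
`xᵢ ↦ ∑ⱼ Aᵢⱼ xⱼ`. -/
noncomputable def substMatrix {k : Type*} [Field k] (A : Matrix (Fin 4) (Fin 4) k)
    (F : MvPolynomial (Fin 4) k) : MvPolynomial (Fin 4) k :=
  aeval (fun i => ∑ j, C (A i j) * X j) F

/-- A matrix `A` leaves the cubic surface `V(F)` invariant if `F(A·x) = λ·F(x)`
for some `λ ∈ kˣ`. -/
def LeavesInvariant {k : Type*} [Field k] (A : Matrix (Fin 4) (Fin 4) k)
    (F : MvPolynomial (Fin 4) k) : Prop :=
  ∃ lam : kˣ, substMatrix A F = (lam : k) • F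

/-!
In characteristic `p` a form `∑ Mᵢⱼ xᵢ ^ q xⱼ` with `q = pⁿ` is `h x x` for the sesquilinear form
`h x y = ∑ Mᵢⱼ xᵢ ^ q yⱼ`, and a cubic without squarefree monomials is of this shape with `q = 2`.
Its partial derivatives are `∑ᵢ Mᵢⱼ xᵢ ^ q`, so smoothness says that `M` is invertible. The vectors
`v` with `h w v = (h v w) ^ q` for all `w` are then the fixed points of a bijective
`q²`-Frobenius-semilinear map, hence span the whole space (Lang). On them `h` is a Hermitian form
over `𝔽_{q²}`, so Gram–Schmidt yields an orthonormal basis; substituting it turns `M` into the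
identity matrix and the form into `∑ xᵢ ^ (q + 1)`.
-/

section Recursion

variable {k : Type*} [Field k] {q : ℕ}

/-- The polynomials `Qᵢ` for which `xᵢ = t ^ q * Qᵢ(t)` solves the recursion
`x₀ = a₀ * t ^ q`, `xᵢ₊₁ = xᵢ ^ q + aᵢ₊₁ * t ^ q`. They turn the side condition `xₙ = t` into the
equation `t ^ (q - 1) * Qₙ(t) = 1` in one variable. -/
noncomputable def recursionPoly (q : ℕ) (a : ℕ → k) : ℕ → Polynomial k
  | 0 => .C (a 0)
  | n + 1 => .X ^ (q * (q - 1)) * recursionPoly q a n ^ q + .C (a (n + 1))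

lemma recursionPoly_ne_zero (hq : 1 < q) {a : ℕ → k} {n i : ℕ} (hi : i ≤ n) (ha : a i ≠ 0) :
    recursionPoly q a n ≠ 0 := by
  have hexp : q * (q - 1) ≠ 0 := mul_ne_zero (by omega) (by omega)
  induction n with
  | zero =>
    obtain rfl : i = 0 := by omega
    simpa [recursionPoly] using ha
  | succ n ih =>
    intro hzero
    have ha' : a (n + 1) = 0 := by
      simpa [recursionPoly, hexp] using congrArg (Polynomial.eval 0) hzero
    have hin : i ≤ n := Nat.le_of_lt_succ (lt_of_le_of_ne hi (by rintro rfl; exact ha ha'))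
    simp [recursionPoly, ha', ih hin] at hzero

variable [IsAlgClosed k]

lemma exists_pow_add_mul_eq (hq : 1 < q) (b c : k) : ∃ t : k, t ^ q + b * t = c := by
  have hdeg : (.X ^ q + .C b * .X : Polynomial k).natDegree = q := by
    have hlt : (.C b * .X : Polynomial k).natDegree < (.X ^ q : Polynomial k).natDegree := by
      rw [Polynomial.natDegree_X_pow]
      exact (Polynomial.natDegree_C_mul_le b .X).trans_lt (by simpa using hq)
    rw [Polynomial.natDegree_add_eq_left_of_natDegree_lt hlt, Polynomial.natDegree_X_pow]
  obtain ⟨t, ht⟩ := IsAlgClosed.eval_surjective (hdeg.trans_ne (by omega)) c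
  exact ⟨t, by simpa using ht⟩

lemma exists_pow_recursion (hq : 1 < q) {a : ℕ → k} {n i : ℕ} (hi : i ≤ n) (ha : a i ≠ 0) :
    ∃ x : ℕ → k, x n ≠ 0 ∧ x 0 = a 0 * x n ^ q ∧
      ∀ j, x (j + 1) = x j ^ q + a (j + 1) * x n ^ q := by
  have hdeg : (.X ^ (q - 1) * recursionPoly q a n).natDegree ≠ 0 := by
    rw [Polynomial.natDegree_X_pow_mul _ (recursionPoly_ne_zero hq hi ha)]
    omega
  obtain ⟨t, ht⟩ := IsAlgClosed.eval_surjective hdeg 1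
  obtain ⟨r, rfl⟩ : ∃ r, q = r + 1 := ⟨q - 1, by omega⟩
  simp only [Nat.add_sub_cancel, Polynomial.eval_mul, Polynomial.eval_pow,
    Polynomial.eval_X] at ht
  have hxn : t ^ (r + 1) * (recursionPoly (r + 1) a n).eval t = t := by
    rw [pow_succ', mul_assoc, ht, mul_one]
  refine ⟨fun j => t ^ (r + 1) * (recursionPoly (r + 1) a j).eval t, ?_, ?_, fun j => ?_⟩
  · simp only [hxn]
    rintro rfl
    simp [show r ≠ 0 by omega] at ht
  · simp only [hxn, recursionPoly, Polynomial.eval_C]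
    ring
  · simp only [hxn, recursionPoly, Polynomial.eval_add, Polynomial.eval_mul, Polynomial.eval_pow,
      Polynomial.eval_X, Polynomial.eval_C, Nat.add_sub_cancel]
    ring

end Recursion

lemma exists_linearIndependent_eq_sum_range {K V : Type*} [DivisionRing K] [AddCommGroup V]
    [Module K V] [FiniteDimensional K V] {w : ℕ → V} (hw : w 0 ≠ 0) :
    ∃ (n : ℕ) (a : ℕ → K), LinearIndependent K (fun i : Fin (n + 1) => w i) ∧
      w (n + 1) = ∑ i ∈ Finset.range (n + 1), a i • w i := by
  by_contra! h
  have hli (n : ℕ) : LinearIndependent K (fun i : Fin (n + 1) => w i) := by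
    induction n with
    | zero => simpa using hw
    | succ n ih =>
      refine linearIndependent_finSucc'.mpr ⟨ih, fun hmem => ?_⟩
      obtain ⟨a, ha⟩ := (Submodule.mem_span_range_iff_exists_fun K).mp hmem
      refine h n (fun i => a (Fin.ofNat (n + 1) i)) ih ?_
      simpa [Finset.sum_range, Fin.init] using ha.symm
  simpa using (hli (Module.finrank K V)).fintype_card_le_finrank

section SemilinearFixedPoints

variable {k V : Type*} [Field k] [IsAlgClosed k] [AddCommGroup V] [Module k V] {σ : k →+* k}
  {q : ℕ}

lemma exists_ne_zero_map_eq_self [FiniteDimensional k V] [Nontrivial V] (hq : 1 < q)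
    (hσ : ∀ c, σ c = c ^ q) (φ : V →ₛₗ[σ] V) (hφ : Function.Injective φ) :
    ∃ u : V, u ≠ 0 ∧ φ u = u := by
  obtain ⟨v, hv⟩ := exists_ne (0 : V)
  obtain ⟨n, a, hli, hrel⟩ := exists_linearIndependent_eq_sum_range (K := k)
    (w := fun i => φ^[i] v) hv
  obtain ⟨i, hi, ha⟩ : ∃ i ≤ n, a i ≠ 0 := by
    by_contra! ha
    have hzero : φ^[n + 1] v = 0 := hrel.trans <| Finset.sum_eq_zero fun i hi => by
      rw [ha i (Finset.mem_range_succ_iff.mp hi), zero_smul]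
    exact hv (hφ.iterate (n + 1) (hzero.trans (iterate_map_zero φ (n + 1)).symm))
  obtain ⟨x, hxn, hx0, hxs⟩ := exists_pow_recursion hq hi ha
  refine ⟨∑ i ∈ Finset.range (n + 1), x i • φ^[i] v, fun h => ?_, ?_⟩
  · rw [Finset.sum_range] at h
    exact hxn (by simpa using Fintype.linearIndependent_iff.mp hli (fun i => x i) h (Fin.last n))
  · calc φ (∑ i ∈ Finset.range (n + 1), x i • φ^[i] v)
        = ∑ i ∈ Finset.range (n + 1), x i ^ q • φ^[i + 1] v := by
          simp only [map_sum, map_smulₛₗ, hσ, Function.iterate_succ_apply']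
      _ = ∑ i ∈ Finset.range n, x i ^ q • φ^[i + 1] v +
            ∑ i ∈ Finset.range (n + 1), (a i * x n ^ q) • φ^[i] v := by
          rw [Finset.sum_range_succ, hrel, Finset.smul_sum]
          simp only [smul_smul, mul_comm]
      _ = ∑ i ∈ Finset.range (n + 1), x i • φ^[i] v := by
          simp only [Finset.sum_range_succ' _ n, hxs, hx0, add_smul, Finset.sum_add_distrib,
            add_assoc]

lemma exists_mem_span_map_add_smul_eq (hq : 1 < q) (hσ : ∀ c, σ c = c ^ q)
    (φ : V →ₛₗ[σ] V) (b : k) {w : V} (hw : w ∈ Submodule.span k (Function.fixedPoints φ)) :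
    ∃ w' ∈ Submodule.span k (Function.fixedPoints φ), φ w' + b • w' = w := by
  obtain ⟨m, c, x, rfl⟩ := Submodule.mem_span_set'.mp hw
  choose t ht using fun i => exists_pow_add_mul_eq hq b (c i)
  refine ⟨∑ i, t i • (x i : V),
    Submodule.sum_mem _ fun i _ => Submodule.smul_mem _ _ (Submodule.subset_span (x i).2), ?_⟩
  have hx (i : Fin m) : φ (x i) = x i := (x i).2
  simp only [map_sum, map_smulₛₗ, hσ, hx, Finset.smul_sum, smul_smul, ← Finset.sum_add_distrib,
    ← add_smul, ht]

theorem span_fixedPoints_eq_top [FiniteDimensional k V] (hq : 1 < q) (hσ : ∀ c, σ c = c ^ q)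
    (φ : V →ₛₗ[σ] V) (hφ : Function.Injective φ) :
    Submodule.span k (Function.fixedPoints φ) = ⊤ := by
  set W := Submodule.span k (Function.fixedPoints φ)
  have hstable : W ≤ W.comap φ :=
    Submodule.span_le.mpr fun x (hx : φ x = x) =>
      show φ x ∈ W from hx.symm ▸ Submodule.subset_span hx
  let ψ : (V ⧸ W) →ₛₗ[σ] (V ⧸ W) := W.mapQ W φ hstable
  have hψ : Function.Injective ψ := (injective_iff_map_eq_zero ψ).mpr fun v hv => by
    obtain ⟨v, rfl⟩ := W.mkQ_surjective v
    have hφv : φ v ∈ W := (Submodule.Quotient.mk_eq_zero W).mp hv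
    obtain ⟨w, hw, hwv⟩ := exists_mem_span_map_add_smul_eq hq hσ φ 0 hφv
    obtain rfl : w = v := hφ (by simpa using hwv)
    exact (Submodule.Quotient.mk_eq_zero W).mpr hw
  by_contra hne
  have : Nontrivial (V ⧸ W) := Submodule.Quotient.nontrivial_iff.mpr hne
  obtain ⟨u, hu0, hu⟩ := exists_ne_zero_map_eq_self hq hσ ψ hψ
  obtain ⟨u, rfl⟩ := W.mkQ_surjective u
  obtain ⟨w, hw, hwu⟩ := exists_mem_span_map_add_smul_eq hq hσ φ (-1)
    ((Submodule.Quotient.eq W).mp hu : φ u - u ∈ W)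
  have hfix : φ (u - w) = u - w := by
    rw [map_sub, sub_eq_sub_iff_sub_eq_sub, ← hwu, neg_one_smul, sub_eq_add_neg]
  have huW : u ∈ W := (Submodule.sub_mem_iff_left W hw).mp (Submodule.subset_span hfix)
  exact hu0 ((Submodule.Quotient.mk_eq_zero W).mpr huW)

end SemilinearFixedPoints

section HermitianVectors

variable {k V : Type*} [Field k] [AddCommGroup V] [Module k V] {σ : k →+* k}
  {h : V →ₛₗ[σ] V →ₗ[k] k} {v w : V}

/-- A vector `v` is Hermitian for the `σ`-sesquilinear form `h` if `h w v = σ (h v w)` for all `w`.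
If `σ` is the `q`-Frobenius, these vectors form an `𝔽_{q²}`-space on which `h` restricts to a
Hermitian form over `𝔽_{q²}`. -/
def IsHermitianVector (h : V →ₛₗ[σ] V →ₗ[k] k) (v : V) : Prop :=
  ∀ w, h w v = σ (h v w)

lemma IsHermitianVector.add (hv : IsHermitianVector h v) (hw : IsHermitianVector h w) :
    IsHermitianVector h (v + w) := fun u => by
  simp only [map_add, LinearMap.add_apply, hv u, hw u]

lemma IsHermitianVector.smul (hv : IsHermitianVector h v) {c : k} (hc : σ (σ c) = c) :
    IsHermitianVector h (c • v) := fun u => by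
  simp only [map_smul, map_smulₛₗ, LinearMap.smul_apply, smul_eq_mul, map_mul, hv u, hc]

lemma IsHermitianVector.map_map_apply (hv : IsHermitianVector h v) (hw : IsHermitianVector h w) :
    σ (σ (h v w)) = h v w := by
  rw [← hv w, ← hw v]

theorem span_isHermitianVector_eq_top [IsAlgClosed k] [FiniteDimensional k V] {q : ℕ} (hq : 1 < q)
    (hσ : ∀ c, σ c = c ^ q) (hh : h.Nondegenerate) :
    Submodule.span k {v | IsHermitianVector h v} = ⊤ := by
  let b := Module.finBasis k V
  let L : V →ₗ[k] Fin (Module.finrank k V) → k := LinearMap.pi fun i => h (b i)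
  have hL : Function.Injective L := (injective_iff_map_eq_zero L).mpr fun z hz =>
    hh.2 z fun x => by
      have hflip : h.flip z = 0 := b.ext fun i => congrFun hz i
      exact LinearMap.congr_fun hflip x
  let e : V ≃ₗ[k] Fin (Module.finrank k V) → k := L.linearEquivOfInjective hL (by simp)
  let φ : V →ₛₗ[σ.comp σ] V :=
    { toFun v := e.symm fun i => σ (h v (b i))
      map_add' v w := by
        rw [← map_add]
        congr 1
        ext i
        simp
      map_smul' c v := by
        rw [RingHom.comp_apply, ← map_smul]
        congr 1
        ext i
        simp }
  have hφ (v y : V) : h y (φ v) = σ (h v y) := by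
    have hb : h.flip (φ v) = σ.toSemilinearMap.comp (h v) :=
      b.ext fun i => congrFun (e.apply_symm_apply fun i => σ (h v (b i))) i
    exact LinearMap.congr_fun hb y
  have hφ_inj : Function.Injective φ := (injective_iff_map_eq_zero φ).mpr fun v hv =>
    hh.1 v fun y => σ.injective (by rw [← hφ, hv, map_zero, map_zero])
  have hσσ (c : k) : σ.comp σ c = c ^ (q * q) := by simp only [RingHom.comp_apply, hσ, pow_mul]
  rw [eq_top_iff, ← span_fixedPoints_eq_top (by nlinarith) hσσ φ hφ_inj]
  exact Submodule.span_mono fun v (hv : φ v = v) w => by rw [← hφ, hv]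

lemma span_isHermitianVector_domRestrict_ker_eq_top
    (hspan : Submodule.span k {v | IsHermitianVector h v} = ⊤) (hv : IsHermitianVector h v)
    (hvv : h v v = 1) :
    Submodule.span k {u | IsHermitianVector (h.domRestrict₁₂ (h v).ker (h v).ker) u} = ⊤ := by
  let P : V →ₗ[k] (h v).ker := (LinearMap.id - (h v).smulRight v).codRestrict _ fun w => by
    simp [hvv]
  have hP (w : V) : (P w : V) = w - h v w • v := rfl
  have hPsurj : Function.Surjective P := fun u => ⟨u, Subtype.ext (by simp [hP])⟩
  have hPherm {w : V} (hw : IsHermitianVector h w) :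
      IsHermitianVector (h.domRestrict₁₂ (h v).ker (h v).ker) (P w) := fun u => by
    simp [LinearMap.domRestrict₁₂_apply, hP, hv u, hw u]
  rw [eq_top_iff, ← LinearMap.range_eq_top.mpr hPsurj, ← Submodule.map_top, ← hspan,
    Submodule.map_span_le]
  exact fun w hw => Submodule.subset_span (hPherm hw)

lemma separatingLeft_domRestrict_ker (hh : h.SeparatingLeft) (hv : IsHermitianVector h v)
    (hvv : h v v = 1) : (h.domRestrict₁₂ (h v).ker (h v).ker).SeparatingLeft := fun u hu => by
  refine Subtype.ext (hh u fun y => ?_)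
  have hmem : y - h v y • v ∈ (h v).ker := by simp [hvv]
  simpa [LinearMap.domRestrict₁₂_apply, hv u] using hu ⟨_, hmem⟩

variable [IsAlgClosed k] {q : ℕ}

lemma exists_isHermitianVector_apply_self_ne_zero (hq : 1 < q) (hσ : ∀ c, σ c = c ^ q)
    (hspan : Submodule.span k {v | IsHermitianVector h v} = ⊤) (hh : h ≠ 0) :
    ∃ v, IsHermitianVector h v ∧ h v v ≠ 0 := by
  by_contra! hiso
  obtain ⟨d, hd⟩ := exists_pow_add_mul_eq hq 1 (1 : k)
  replace hd : d + σ d = 1 := by rw [hσ]; linear_combination hd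
  have hσσd : σ (σ d) = d := by
    have hσd := congrArg σ hd
    rw [map_add, map_one] at hσd
    linear_combination hσd - hd
  have horth {v w : V} (hv : IsHermitianVector h v) (hw : IsHermitianVector h w) : h v w = 0 := by
    by_contra hvw
    let c := d / h v w
    have hcd : c * h v w = d := div_mul_cancel₀ d hvw
    have hc : σ (σ c) = c := by simp only [c, map_div₀, hσσd, hv.map_map_apply hw]
    have hsum : h (v + c • w) (v + c • w) = d + σ d := by
      simp only [map_add, map_smul, map_smulₛₗ, LinearMap.add_apply, LinearMap.smul_apply,
        smul_eq_mul, hiso v hv, hiso w hw, hv w]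
      rw [← hcd, map_mul]
      ring
    rw [hiso _ (hv.add (hw.smul hc)), hd] at hsum
    exact zero_ne_one hsum
  refine hh (LinearMap.ext_on hspan fun v hv => LinearMap.ext_on hspan fun w hw => ?_)
  exact horth hv hw

lemma exists_isHermitianVector_apply_self_eq_one (hq : 1 < q) (hσ : ∀ c, σ c = c ^ q)
    (hspan : Submodule.span k {v | IsHermitianVector h v} = ⊤) (hh : h ≠ 0) :
    ∃ v, IsHermitianVector h v ∧ h v v = 1 := by
  obtain ⟨v, hv, hvv⟩ := exists_isHermitianVector_apply_self_ne_zero hq hσ hspan hh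
  obtain ⟨c, hc⟩ := IsAlgClosed.exists_pow_nat_eq (h v v)⁻¹ q.succ_pos
  replace hc : σ c * c = (h v v)⁻¹ := by rw [hσ, ← hc, pow_succ]
  have hσσc : σ (σ c) = c := by
    have hσc : σ (σ c) * σ c = (h v v)⁻¹ := by rw [← map_mul, hc, map_inv₀, ← hv v]
    have hne : σ c ≠ 0 := left_ne_zero_of_mul (hc.trans_ne (inv_ne_zero hvv))
    exact mul_right_cancel₀ hne (by rw [hσc, ← hc, mul_comm])
  refine ⟨c • v, hv.smul hσσc, ?_⟩
  simp only [map_smul, map_smulₛₗ, LinearMap.smul_apply, smul_eq_mul]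
  rw [← mul_assoc, mul_comm c, hc, inv_mul_cancel₀ hvv]

end HermitianVectors

theorem exists_orthonormal_of_span_isHermitianVector {k V : Type*} [Field k] [IsAlgClosed k]
    [AddCommGroup V] [Module k V] [FiniteDimensional k V] {σ : k →+* k} {q : ℕ} (hq : 1 < q)
    (hσ : ∀ c, σ c = c ^ q) {h : V →ₛₗ[σ] V →ₗ[k] k} (hh : h.SeparatingLeft)
    (hspan : Submodule.span k {v | IsHermitianVector h v} = ⊤) {n : ℕ}
    (hn : Module.finrank k V = n) :
    ∃ e : Fin n → V, ∀ i j, h (e i) (e j) = if i = j then 1 else 0 := by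
  induction n generalizing V with
  | zero => exact ⟨Fin.elim0, fun i => i.elim0⟩
  | succ n ih =>
    have hne : h ≠ 0 := by
      rintro rfl
      have : Nontrivial V := Module.nontrivial_of_finrank_eq_succ hn
      obtain ⟨x, hx⟩ := exists_ne (0 : V)
      exact hx (hh x fun _ => rfl)
    obtain ⟨v, hv, hvv⟩ := exists_isHermitianVector_apply_self_eq_one hq hσ hspan hne
    have hker : Module.finrank k (h v).ker = n := by
      have := Module.Dual.finrank_ker_add_one_of_ne_zero (f := h v) (by rintro h0; simp [h0] at hvv)
      omega
    obtain ⟨e, he⟩ := ih (separatingLeft_domRestrict_ker hh hv hvv)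
      (span_isHermitianVector_domRestrict_ker_eq_top hspan hv hvv) hker
    refine ⟨Fin.cons v fun i => e i, fun i j => ?_⟩
    cases i using Fin.cases with
    | zero =>
      cases j using Fin.cases with
      | zero => simpa using hvv
      | succ j => simp [(Fin.succ_ne_zero j).symm]
    | succ i =>
      cases j using Fin.cases with
      | zero => simp [hv (e i)]
      | succ j => simpa [LinearMap.domRestrict₁₂_apply] using he i j

theorem exists_orthonormal {k V : Type*} [Field k] [IsAlgClosed k] [AddCommGroup V] [Module k V]
    [FiniteDimensional k V] {σ : k →+* k} {q : ℕ} (hq : 1 < q) (hσ : ∀ c, σ c = c ^ q)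
    {h : V →ₛₗ[σ] V →ₗ[k] k} (hh : h.Nondegenerate) :
    ∃ e : Fin (Module.finrank k V) → V, ∀ i j, h (e i) (e j) = if i = j then 1 else 0 :=
  exists_orthonormal_of_span_isHermitianVector hq hσ hh.1
    (span_isHermitianVector_eq_top hq hσ hh) rfl

section SesquilinearMatrix

variable {ι k : Type*} [Fintype ι] [DecidableEq ι] [Field k] {σ : k →+* k} {M : Matrix ι ι k}

lemma toLinearMapₛₗ₂'_apply_eq_dotProduct (x y : ι → k) :
    toLinearMapₛₗ₂' k σ (RingHom.id k) M x y = (σ ∘ x) ⬝ᵥ M *ᵥ y := by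
  simp only [toLinearMapₛₗ₂'_apply, dotProduct, mulVec, Function.comp_apply, RingHom.id_apply,
    smul_eq_mul, Finset.mul_sum, mul_comm (y _)]

lemma nondegenerate_toLinearMapₛₗ₂' (hM : M.det ≠ 0) :
    (toLinearMapₛₗ₂' k σ (RingHom.id k) M).Nondegenerate := by
  refine ⟨fun x hx => ?_, fun y hy => ?_⟩
  · have hxM : (σ ∘ x) ᵥ* M = 0 := dotProduct_eq_zero _ fun y => by
      rw [← dotProduct_mulVec, ← toLinearMapₛₗ₂'_apply_eq_dotProduct, hx]
    have hσx : σ ∘ x = 0 := eq_zero_of_vecMul_eq_zero hM hxM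
    exact funext fun i => σ.injective ((congrFun hσx i).trans (map_zero σ).symm)
  · refine eq_zero_of_mulVec_eq_zero hM (funext fun i => ?_)
    have hi : σ ∘ Pi.single i 1 = (Pi.single i 1 : ι → k) := by
      ext j
      simp [Pi.single_apply, apply_ite]
    rw [← single_one_dotProduct i (M *ᵥ y), ← hi, ← toLinearMapₛₗ₂'_apply_eq_dotProduct, hy,
      Pi.zero_apply]

theorem exists_map_transpose_mul_mul_eq_one [IsAlgClosed k] {q : ℕ} (hq : 1 < q)
    (hσ : ∀ c, σ c = c ^ q) (hM : M.det ≠ 0) :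
    ∃ A : Matrix ι ι k, (A.map σ)ᵀ * M * A = 1 := by
  obtain ⟨e, he⟩ := exists_orthonormal hq hσ (nondegenerate_toLinearMapₛₗ₂' (σ := σ) hM)
  let f : ι ≃ Fin (Module.finrank k (ι → k)) := Fintype.equivFinOfCardEq (by simp)
  let A : Matrix ι ι k := (of fun j => e (f j))ᵀ
  refine ⟨A, ext fun i j => ?_⟩
  calc ((A.map σ)ᵀ * M * A) i j = (σ ∘ e (f i)) ⬝ᵥ M *ᵥ e (f j) := by rw [Matrix.mul_assoc]; rfl
    _ = if f i = f j then 1 else 0 := by rw [← toLinearMapₛₗ₂'_apply_eq_dotProduct, he]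
    _ = (1 : Matrix ι ι k) i j := by simp only [f.apply_eq_iff_eq, one_apply]

end SesquilinearMatrix

section FrobeniusForm

variable {ι R : Type*} [Fintype ι] [CommSemiring R]

/-- The Frobenius form (also called `q`-bic form) `∑ Mᵢⱼ xᵢ ^ q xⱼ` with Gram matrix `M`. For
`q = 2` these are the cubic forms without squarefree monomials. -/
noncomputable def frobeniusForm (q : ℕ) (M : Matrix ι ι R) : MvPolynomial ι R :=
  ∑ i, ∑ j, C (M i j) * X i ^ q * X j

lemma frobeniusForm_one [DecidableEq ι] (q : ℕ) :
    frobeniusForm q (1 : Matrix ι ι R) = ∑ i, X i ^ (q + 1) := by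
  simp [frobeniusForm, Matrix.one_apply, pow_succ, apply_ite]

lemma aeval_frobeniusForm {S : Type*} [CommSemiring S] [Algebra R S] (q : ℕ) (M : Matrix ι ι R)
    (y : ι → S) :
    aeval y (frobeniusForm q M) = (fun i => y i ^ q) ⬝ᵥ M.map (algebraMap R S) *ᵥ y := by
  simp only [frobeniusForm, map_sum, map_mul, map_pow, aeval_C, aeval_X, dotProduct, mulVec,
    Finset.mul_sum, Matrix.map_apply]
  exact Finset.sum_congr rfl fun i _ => Finset.sum_congr rfl fun j _ => by ring

lemma eval_frobeniusForm (q : ℕ) (M : Matrix ι ι R) (x : ι → R) :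
    eval x (frobeniusForm q M) = (fun i => x i ^ q) ᵥ* M ⬝ᵥ x := by
  rw [← dotProduct_mulVec]
  exact aeval_frobeniusForm q M x

lemma eval_pderiv_frobeniusForm {q : ℕ} (hq : (q : R) = 0) (M : Matrix ι ι R) (x : ι → R) (l : ι) :
    eval x (pderiv l (frobeniusForm q M)) = ((fun i => x i ^ q) ᵥ* M) l := by
  classical
  simp only [frobeniusForm, map_sum, Derivation.leibniz, pderiv_C, Derivation.leibniz_pow, pderiv_X,
    smul_eq_mul, map_add, map_mul, eval_C, eval_X, map_pow, nsmul_eq_mul, map_natCast, hq]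
  exact Finset.sum_congr rfl fun i _ => by simp [Pi.single_apply, apply_ite, mul_comm (M i l)]

lemma sum_C_mul_X_pow_expChar_pow {κ : Type*} [Fintype κ] (p n : ℕ) [ExpChar R p] (a : κ → R) :
    (∑ j, C (a j) * X j : MvPolynomial κ R) ^ p ^ n =
      ∑ j, C (iterateFrobenius R p n (a j)) * X j ^ p ^ n := by
  simp only [sum_pow_char_pow, mul_pow, iterateFrobenius_def, map_pow]

lemma aeval_linear_frobeniusForm (p n : ℕ) [ExpChar R p] (M A : Matrix ι ι R) :
    aeval (fun i => ∑ j, C (A i j) * X j) (frobeniusForm (p ^ n) M) =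
      frobeniusForm (p ^ n) ((A.map (iterateFrobenius R p n))ᵀ * M * A) := by
  rw [aeval_frobeniusForm]
  conv_rhs => rw [← aeval_X_left_apply (frobeniusForm _ _), aeval_frobeniusForm]
  have hlin : (fun i => ∑ j, C (A i j) * X j : ι → MvPolynomial ι R) = A.map C *ᵥ X := rfl
  have hpow : (fun i => (∑ j, C (A i j) * X j : MvPolynomial ι R) ^ p ^ n) =
      (A.map (iterateFrobenius R p n)).map C *ᵥ fun i => X i ^ p ^ n :=
    funext fun i => sum_C_mul_X_pow_expChar_pow p n (A i)
  rw [hlin, hpow, algebraMap_eq, Matrix.map_mul, Matrix.map_mul, transpose_map, ← vecMul_transpose,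
    ← dotProduct_mulVec, mulVec_mulVec, mulVec_mulVec, Matrix.mul_assoc]

lemma det_ne_zero_of_smooth {k : Type*} [Field k] [IsAlgClosed k] [DecidableEq ι] {q : ℕ}
    (hq : q ≠ 0) (hqk : (q : k) = 0) {M : Matrix ι ι k}
    (hsmooth : ∀ x : ι → k, eval x (frobeniusForm q M) = 0 →
      (∀ i, eval x (pderiv i (frobeniusForm q M)) = 0) → x = 0) :
    M.det ≠ 0 := by
  intro hdet
  obtain ⟨w, hw, hwM⟩ := exists_vecMul_eq_zero_iff.mpr hdet
  choose x hx using fun i => IsAlgClosed.exists_pow_nat_eq (w i) (Nat.pos_of_ne_zero hq)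
  have hxM : (fun i => x i ^ q) ᵥ* M = 0 := by simpa only [hx] using hwM
  have hx0 : x = 0 := hsmooth x (by simp [eval_frobeniusForm, hxM])
    fun l => by simp [eval_pderiv_frobeniusForm hqk, hxM]
  exact hw (funext fun i => by simp [← hx i, hx0, hq])

end FrobeniusForm

section Cubic

lemma exists_eq_single_add_single_add_single {ι : Type*} {m : ι →₀ ℕ} (hm : m.degree = 3) :
    ∃ i j l, m = .single i 1 + .single j 1 + .single l 1 := by
  classical
  obtain ⟨i, j, l, hijl⟩ := Multiset.card_eq_three.mp ((Finsupp.card_toMultiset m).trans hm)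
  refine ⟨i, j, l, Multiset.toFinsupp.symm.injective ?_⟩
  change Finsupp.toMultiset m = Finsupp.toMultiset _
  simp [hijl, Finsupp.toMultiset_single, Multiset.insert_eq_cons, ← Multiset.singleton_add,
    add_assoc]

lemma single_two_add_single_one_injective (ι : Type*) :
    Function.Injective fun ij : ι × ι => (.single ij.1 2 + .single ij.2 1 : ι →₀ ℕ) := by
  classical
  rintro ⟨i, j⟩ ⟨i', j'⟩ h
  obtain rfl : i = i' := by
    by_contra hne
    have hi := DFunLike.congr_fun h i
    simp only [Finsupp.add_apply, Finsupp.single_apply, if_true, if_neg (Ne.symm hne)] at hi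
    split_ifs at hi <;> omega
  simpa [Finsupp.single_left_inj] using h

variable {ι R : Type*} [Fintype ι] [CommSemiring R]

lemma eq_frobeniusForm_two {F : MvPolynomial ι R} (hhom : F.IsHomogeneous 3)
    (hcoeff : ∀ i j l : ι, i ≠ j → i ≠ l → j ≠ l →
      F.coeff (Finsupp.single i 1 + Finsupp.single j 1 + Finsupp.single l 1) = 0) :
    F = frobeniusForm 2 (.of fun i j => F.coeff (.single i 2 + .single j 1)) := by
  classical
  have hsupp : F.support ⊆ Finset.univ.image
      fun ij : ι × ι => (.single ij.1 2 + .single ij.2 1 : ι →₀ ℕ) := fun m hm => by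
    rw [mem_support_iff] at hm
    obtain ⟨i, j, l, rfl⟩ := exists_eq_single_add_single_add_single
      (by_contra fun h => hm (hhom.coeff_eq_zero h))
    have htwo (i : ι) : (.single i 2 : ι →₀ ℕ) = .single i 1 + .single i 1 := by
      rw [← Finsupp.single_add]
    simp only [Finset.mem_image, Finset.mem_univ, true_and, Prod.exists, htwo]
    by_cases hij : i = j
    · exact ⟨i, l, by rw [hij]⟩
    by_cases hil : i = l
    · exact ⟨i, j, by rw [hil, add_right_comm]⟩
    by_cases hjl : j = l
    · exact ⟨j, i, by rw [hjl]; abel⟩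
    exact absurd (hcoeff i j l hij hil hjl) hm
  calc F = ∑ m ∈ F.support, monomial m (F.coeff m) := F.as_sum
    _ = ∑ m ∈ Finset.univ.image fun ij : ι × ι => (.single ij.1 2 + .single ij.2 1 : ι →₀ ℕ),
          monomial m (F.coeff m) :=
      Finset.sum_subset hsupp fun m _ hm => by simp [notMem_support_iff.mp hm]
    _ = ∑ i, ∑ j, monomial (.single i 2 + .single j 1) (F.coeff (.single i 2 + .single j 1)) := by
      rw [Finset.sum_image (single_two_add_single_one_injective ι).injOn,
        Fintype.sum_prod_type]
    _ = _ := by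
      simp only [frobeniusForm, of_apply, X, monomial_pow, C_mul_monomial, monomial_mul,
        Finsupp.smul_single_one, one_pow, mul_one]

end Cubic

theorem stmt9_general {ι k : Type*} [Fintype ι] [DecidableEq ι] [Field k] [IsAlgClosed k]
    {p n : ℕ} [Fact p.Prime] [CharP k p] (hn : n ≠ 0) (M : Matrix ι ι k)
    (hsmooth : ∀ x : ι → k, eval x (frobeniusForm (p ^ n) M) = 0 →
      (∀ i, eval x (pderiv i (frobeniusForm (p ^ n) M)) = 0) → x = 0) :
    ∃ A : Matrix ι ι k, IsUnit A.det ∧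
      aeval (fun i => ∑ j, C (A i j) * X j) (frobeniusForm (p ^ n) M) =
        ∑ i, (X i ^ (p ^ n + 1) : MvPolynomial ι k) := by
  have hq : 1 < p ^ n := Nat.one_lt_pow hn (Fact.out : p.Prime).one_lt
  have hM : M.det ≠ 0 := det_ne_zero_of_smooth (by omega) (by simp [hn]) hsmooth
  obtain ⟨A, hA⟩ := exists_map_transpose_mul_mul_eq_one (σ := iterateFrobenius k p n) hq
    (iterateFrobenius_def p n) hM
  refine ⟨A, isUnit_det_of_left_inverse hA, ?_⟩
  rw [aeval_linear_frobeniusForm, hA, frobeniusForm_one]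

/-- In characteristic 2, a smooth cubic surface all of whose
coefficients of squarefree cubic monomials `xᵢxⱼx_l` vanish (i.e. with no
canonical point) is projectively equivalent to the Fermat cubic surface. -/
theorem stmt9 {k : Type*} [Field k] [IsAlgClosed k] (hchar : ringChar k = 2)
    (F : MvPolynomial (Fin 4) k) (hF0 : F ≠ 0) (hhom : F.IsHomogeneous 3)
    (hsmooth : ∀ x : Fin 4 → k,
      eval x F = 0 → (∀ i, eval x (pderiv i F) = 0) → x = 0)
    (hcoeff : ∀ i j l : Fin 4, i ≠ j → i ≠ l → j ≠ l →
      F.coeff (Finsupp.single i 1 + Finsupp.single j 1 + Finsupp.single l 1) = 0) :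
    ∃ (A : Matrix (Fin 4) (Fin 4) k) (c : kˣ), IsUnit A.det ∧
      substMatrix A F =
        (c : k) • (X 0 ^ 3 + X 1 ^ 3 + X 2 ^ 3 + X 3 ^ 3 :
          MvPolynomial (Fin 4) k) := by
  have : CharP k 2 := ringChar.of_eq hchar
  rw [eq_frobeniusForm_two hhom hcoeff] at hsmooth ⊢
  obtain ⟨A, hA, hAF⟩ := stmt9_general (p := 2) (n := 1) one_ne_zero _ hsmooth
  exact ⟨A, 1, hA, by simpa [substMatrix, Fin.sum_univ_four] using hAF⟩
end

section
/- Let F = x₀³ + x₁³ + x₂³ + x₃³ and let G be the stabilizer of the Fermat cubic surface V(F) in PGL₄(k), i.e., the image in PGL₄(k) of {A ∈ GL₄(k) : ∃ λ ∈ kˣ, F(A·x) = λ·F(x)}. If char k ∉ {2,3}, then G has cardinality 648 (it is isomorphic to 3³ ⋊ S₄). If char k = 2, then G has cardinality 25920 (it is isomorphic to the simple group PSU₄(2)). -/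
open MvPolynomial Matrix

/-- The subgroup of scalar matrices in `GL₄(k)`; `PGL₄(k)` is the quotient
of `GL₄(k)` by this subgroup. -/
def scalarSubgroup (k : Type*) [Field k] : Subgroup (GL (Fin 4) k) :=
  (Units.map (algebraMap k (Matrix (Fin 4) (Fin 4) k)).toMonoidHom).range

/-! Suppose `F(A·x) = c·F(x)`. Comparing first derivatives gives `(A⁽²⁾)ᵀ * A = c • 1`, where `A⁽²⁾`
is the entrywise square of `A`.

If the characteristic is not `2`, comparing Hessians at the basis vectors shows that every column of
`A` has a single nonzero entry. Hence for `c = 1` the solutions are the `4! * 3 ^ 4 = 1944` monomial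
matrices whose nonzero entries are cube roots of unity.

In characteristic `2` the first-derivative identity is equivalent to `F(A·x) = c·F(x)`, and applying
it twice gives `a ^ 4 = c * a` for every entry `a` of `A`. For `c = 1` the entries lie in the field
with four elements, where `x ^ 2` is the conjugate of `x` and `F(x) = ∑ xᵢ²·xᵢ` is the Hermitian
norm, so the solutions form the unitary group `U₄(2)`. Counting orthonormal frames vector by vector
gives its order `77760`.

In both cases every multiplier `c` is a cube, so `A` can be rescaled to have `c = 1` without
changing its class in `PGL₄(k)`, and exactly three scalar matrices preserve `F`. The stabilizer
therefore has `1944 / 3 = 648`, respectively `77760 / 3 = 25920`, elements. -/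

section Similitude

variable {n R : Type*} [Fintype n] [CommRing R]

/-- `A` is a similitude of the Fermat cubic `F = ∑ xᵢ³` with multiplier `c`: `F(A·x) = c·F(x)` as
polynomials. -/
def IsFermatSimilitude (c : R) (A : Matrix n n R) : Prop :=
  ∑ i, A.toMvPolynomial i ^ 3 = C c * ∑ i, (X i : MvPolynomial n R) ^ 3

variable {c d : R} {A B : Matrix n n R}

theorem pderiv_toMvPolynomial (A : Matrix n n R) (i l : n) :
    pderiv l (A.toMvPolynomial i) = C (A i l) := by
  classical
  simp [toMvPolynomial, ← C_mul_X_eq_monomial, pderiv_X, Pi.single_apply]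

namespace IsFermatSimilitude

theorem one [DecidableEq n] : IsFermatSimilitude 1 (1 : Matrix n n R) := by
  simp [IsFermatSimilitude]

theorem mul (hA : IsFermatSimilitude c A) (hB : IsFermatSimilitude d B) :
    IsFermatSimilitude (c * d) (A * B) := by
  have hAB := congrArg (bind₁ B.toMvPolynomial) hA
  simp only [map_sum, map_pow, map_mul, bind₁_C_right, bind₁_X_right,
    ← toMvPolynomial_mul] at hAB
  rw [IsFermatSimilitude, hAB, hB, ← mul_assoc, ← C_mul]

theorem of_mul_eq_one [DecidableEq n] (hA : IsFermatSimilitude 1 A) (hAB : A * B = 1) :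
    IsFermatSimilitude 1 B := by
  have hB := congrArg (bind₁ B.toMvPolynomial) hA
  simpa [IsFermatSimilitude, ← toMvPolynomial_mul, hAB, eq_comm] using hB

theorem smul (hA : IsFermatSimilitude c A) (a : R) : IsFermatSimilitude (a ^ 3 * c) (a • A) := by
  have haA : ∀ i, (a • A).toMvPolynomial i = C a * A.toMvPolynomial i := fun i => by
    simp only [toMvPolynomial, Matrix.smul_apply, smul_eq_mul, ← C_mul_monomial, Finset.mul_sum]
  simp only [IsFermatSimilitude, haA, mul_pow, ← Finset.mul_sum]
  rw [hA, C_mul, C_pow, mul_assoc]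

section Coefficients

variable [NoZeroDivisors R]

theorem sum_toMvPolynomial_sq_mul (h3 : (3 : R) ≠ 0) (hA : IsFermatSimilitude c A) (l : n) :
    ∑ i, A.toMvPolynomial i ^ 2 * C (A i l) = C c * X l ^ 2 := by
  classical
  have h3' : (3 : MvPolynomial n R) ≠ 0 := by
    simpa only [map_ofNat] using (map_ne_zero_iff C (C_injective n R)).2 h3
  have h := congrArg (pderiv l) hA
  simp only [map_sum, pderiv_pow, pderiv_C_mul, pderiv_toMvPolynomial, pderiv_X, Pi.single_apply,
    mul_assoc, ← Finset.mul_sum] at h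
  simpa [h3', mul_left_comm] using h

theorem sum_toMvPolynomial_mul_mul (h2 : (2 : R) ≠ 0) (h3 : (3 : R) ≠ 0)
    (hA : IsFermatSimilitude c A) [DecidableEq n] (l m : n) :
    ∑ i, A.toMvPolynomial i * (C (A i m) * C (A i l)) = if m = l then C c * X l else 0 := by
  have h2' : (2 : MvPolynomial n R) ≠ 0 := by
    simpa only [map_ofNat] using (map_ne_zero_iff C (C_injective n R)).2 h2
  have h := congrArg (pderiv m) (hA.sum_toMvPolynomial_sq_mul h3 l)
  simp only [map_sum, pderiv_mul, pderiv_pow, pderiv_C, pderiv_toMvPolynomial,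
    pderiv_X, Pi.single_apply, mul_zero, add_zero, mul_assoc, ← Finset.mul_sum] at h
  refine mul_left_cancel₀ h2' ?_
  simpa [mul_left_comm, mul_ite, eq_comm] using h

variable [DecidableEq n]

theorem transpose_map_sq_mul (h3 : (3 : R) ≠ 0) (hA : IsFermatSimilitude c A) :
    (A.map (· ^ 2))ᵀ * A = c • 1 := by
  ext j l
  have h := congrArg (eval (Pi.single j 1)) (hA.sum_toMvPolynomial_sq_mul h3 l)
  simpa [toMvPolynomial_eval_eq_apply, mul_apply, one_apply, Pi.single_apply, mul_comm,
    eq_comm (a := l)] using h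

theorem transpose_mul_diagonal_col_mul (h2 : (2 : R) ≠ 0) (h3 : (3 : R) ≠ 0)
    (hA : IsFermatSimilitude c A) (m : n) :
    Aᵀ * diagonal (A.col m) * A = diagonal (Pi.single m c) := by
  ext j l
  have h := congrArg (eval (Pi.single j 1)) (hA.sum_toMvPolynomial_mul_mul h2 h3 l m)
  rw [apply_ite (eval (Pi.single j 1))] at h
  have hjlm : (if m = l then if l = j then c else 0 else 0) = diagonal (Pi.single m c) j l := by
    grind [diagonal_apply]
  rw [← hjlm]
  simpa [toMvPolynomial_eval_eq_apply, mul_apply, diagonal_apply, Pi.single_apply, mul_comm,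
    mul_left_comm] using h

end Coefficients

end IsFermatSimilitude

end Similitude

section Monomial

variable {n k : Type*} [Field k]

theorem submatrix_diagonal_injective [DecidableEq n] {d d' : n → k} {σ τ : Equiv.Perm n}
    (hd : ∀ j, d j ≠ 0) (h : (diagonal d).submatrix σ id = (diagonal d').submatrix τ id) :
    σ = τ ∧ d = d' := by
  have hστ : σ = τ := Equiv.ext fun i => by
    have hi := congrFun₂ h i (σ i)
    by_contra hne
    simp [Ne.symm hne, hd] at hi
  subst hστ
  refine ⟨rfl, funext fun j => ?_⟩
  simpa using congrFun₂ h (σ.symm j) j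

variable [Fintype n] {c : k} {A : Matrix n n k}

theorem isFermatSimilitude_submatrix_diagonal [DecidableEq n] (σ : Equiv.Perm n) {d : n → k}
    (hd : ∀ j, d j ^ 3 = c) : IsFermatSimilitude c ((diagonal d).submatrix σ id) := by
  have hσ : ∀ i, ((diagonal d).submatrix σ id).toMvPolynomial i = C (d (σ i)) * X (σ i) := by
    simp [toMvPolynomial, diagonal_apply, ← C_mul_X_eq_monomial, apply_ite C]
  simp only [IsFermatSimilitude, hσ, mul_pow, ← C_pow, hd, Finset.mul_sum]
  exact Equiv.sum_comp σ fun i => C c * (X i : MvPolynomial n k) ^ 3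

namespace IsFermatSimilitude

theorem isUnit_det [DecidableEq n] (h3 : (3 : k) ≠ 0) (hc : c ≠ 0) (hA : IsFermatSimilitude c A) :
    IsUnit A.det := by
  have hdet := congrArg det (hA.transpose_map_sq_mul h3)
  rw [det_mul, det_smul, det_one, mul_one] at hdet
  exact isUnit_of_mul_isUnit_right (hdet ▸ (pow_ne_zero _ hc).isUnit)

/- Up to the factor `6`, `Aᵀ * diagonal (A.col m) * A` is the Hessian of `F(A·x) = c·F(x)` at the
basis vector `eₘ`: it has rank `1`, and its rank is the number of nonzero entries of `A.col m`. -/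
theorem existsUnique_apply_ne_zero (h2 : (2 : k) ≠ 0) (h3 : (3 : k) ≠ 0) (hc : c ≠ 0)
    (hA : IsFermatSimilitude c A) (m : n) : ∃! i, A i m ≠ 0 := by
  classical
  have hdet := hA.isUnit_det h3 hc
  have hrank : (diagonal (A.col m)).rank = (diagonal (Pi.single m c)).rank := by
    rw [← hA.transpose_mul_diagonal_col_mul h2 h3, rank_mul_eq_left_of_isUnit_det _ _ hdet,
      rank_mul_eq_right_of_isUnit_det _ _ (by rwa [det_transpose])]
  have hm : ∃! i, (Pi.single m c : n → k) i ≠ 0 := by simp [Pi.single_apply, hc]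
  rw [rank_diagonal, rank_diagonal, Fintype.card_eq_one_iff_nonempty_unique.2
    ((unique_subtype_iff_existsUnique _).2 hm), Fintype.card_eq_one_iff_nonempty_unique] at hrank
  exact (unique_subtype_iff_existsUnique _).1 hrank

theorem exists_eq_submatrix_diagonal [DecidableEq n] (h2 : (2 : k) ≠ 0) (h3 : (3 : k) ≠ 0)
    (hc : c ≠ 0) (hA : IsFermatSimilitude c A) :
    ∃ (σ : Equiv.Perm n) (d : n → k), (∀ j, d j ^ 3 = c) ∧ A = (diagonal d).submatrix σ id := by
  choose τ _ hτ using hA.existsUnique_apply_ne_zero h2 h3 hc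
  have hA_zero : ∀ {i m}, i ≠ τ m → A i m = 0 := fun h => by_contra fun h' => h (hτ _ _ h')
  have hτ_surj : Function.Surjective τ := fun i => by
    by_contra! hi
    exact (hA.isUnit_det h3 hc).ne_zero
      (det_eq_zero_of_row_eq_zero i fun m => hA_zero (hi m).symm)
  let e := Equiv.ofBijective τ hτ_surj.bijective_of_finite
  refine ⟨e.symm, fun j => A (e j) j, fun j => ?_, ?_⟩
  · have h := congrFun₂ (hA.transpose_map_sq_mul h3) j j
    rw [mul_apply, Finset.sum_eq_single (e j) (fun i _ hi => by simp [hA_zero hi]) (by simp)] at h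
    simpa [pow_succ] using h
  · ext i m
    obtain ⟨j, rfl⟩ := e.surjective i
    by_cases hjm : j = m
    · simp [hjm]
    · simp [hjm, hA_zero (e.injective.ne hjm)]

end IsFermatSimilitude

theorem three_ne_zero_of_isPrimitiveRoot {ω : k} (hω : IsPrimitiveRoot ω 3) : (3 : k) ≠ 0 :=
  mod_cast hω.neZero'.out

open Nat in
theorem ncard_isFermatSimilitude_one_of_two_ne_zero {ω : k} (hω : IsPrimitiveRoot ω 3)
    (h2 : (2 : k) ≠ 0) :
    {A : Matrix n n k | IsFermatSimilitude 1 A}.ncard =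
      (Fintype.card n)! * 3 ^ Fintype.card n := by
  classical
  let f : Equiv.Perm n × (n → rootsOfUnity 3 k) → Matrix n n k :=
    fun p => (diagonal fun j => ((p.2 j : kˣ) : k)).submatrix p.1 id
  have hf : Function.Injective f := fun p q hpq => by
    obtain ⟨hσ, hd⟩ := submatrix_diagonal_injective (fun j => (p.2 j : kˣ).ne_zero) hpq
    exact Prod.ext hσ (funext fun j => Subtype.ext (Units.ext (congrFun hd j)))
  have hrange : {A : Matrix n n k | IsFermatSimilitude 1 A} = Set.range f := by
    ext A
    constructor
    · intro hA
      obtain ⟨σ, d, hd, rfl⟩ := hA.exists_eq_submatrix_diagonal h2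
        (three_ne_zero_of_isPrimitiveRoot hω) one_ne_zero
      exact ⟨⟨σ, fun j => rootsOfUnity.mkOfPowEq (d j) (hd j)⟩, rfl⟩
    · rintro ⟨p, rfl⟩
      exact isFermatSimilitude_submatrix_diagonal p.1 fun j =>
        (mem_rootsOfUnity' 3 (p.2 j : kˣ)).1 (p.2 j).2
  rw [hrange, Set.ncard_range_of_injective hf, Nat.card_prod, Nat.card_perm, Nat.card_pi,
    Finset.prod_const, hω.card_rootsOfUnity, Finset.card_univ, Nat.card_eq_fintype_card]

end Monomial

section HermitianCounting

variable {F : Type*} [Field F] [StarRing F] {q : ℕ}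

theorem card_star_mul_self_eq [Finite F] (hF : Nat.card F = q ^ 2) (hstar : ∀ x : F, star x = x ^ q)
    {a : F} (ha : star a = a) (ha0 : a ≠ 0) : Nat.card {c : F // star c * c = a} = q + 1 := by
  classical
  have hq : 1 < q := (Nat.one_lt_pow_iff two_ne_zero).1 (hF ▸ Finite.one_lt_card)
  obtain ⟨g, hg⟩ := IsCyclic.exists_monoid_generator (α := Fˣ)
  have hg_order : orderOf g = (q - 1) * (q + 1) := by
    rw [orderOf_eq_card_of_forall_mem_powers hg, Nat.card_units, hF, mul_comm, ← Nat.sq_sub_sq,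
      one_pow]
  have hζ : IsPrimitiveRoot ((g : F) ^ (q - 1)) (q + 1) :=
    (IsPrimitiveRoot.coe_units_iff.2 (IsPrimitiveRoot.orderOf g)).pow (orderOf_pos g) hg_order
  have hroot : ∃ c, c ^ (q + 1) = a := by
    obtain ⟨i, hi⟩ := hg (Units.mk0 a ha0)
    have ha_pow : Units.mk0 a ha0 ^ (q - 1) = 1 := by
      rw [← mul_left_inj (Units.mk0 a ha0), pow_sub_one_mul (by lia), one_mul]
      exact Units.ext ((hstar a).symm.trans ha)
    rw [← hi, ← pow_mul', ← orderOf_dvd_iff_pow_eq_one, hg_order] at ha_pow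
    obtain ⟨j, rfl⟩ := Nat.dvd_of_mul_dvd_mul_left (Nat.sub_pos_of_lt hq) ha_pow
    exact ⟨g ^ j, by simpa [← pow_mul'] using congrArg Units.val hi⟩
  have hmem : ∀ c, c ∈ (Polynomial.nthRoots (q + 1) a).toFinset ↔ star c * c = a := fun c => by
    rw [Multiset.mem_toFinset, Polynomial.mem_nthRoots q.succ_pos, hstar, pow_succ]
  rw [Nat.subtype_card _ hmem, Multiset.toFinset_card_of_nodup (hζ.nthRoots_nodup ha0),
    hζ.card_nthRoots, if_pos hroot]

theorem card_eq_one_add_mul_card_eq_one_of_prod_equiv [Finite F] (hF : Nat.card F = q ^ 2)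
    (hstar : ∀ x : F, star x = x ^ q) {V W : Type*} [Finite W] (e : W × F ≃ V) {N : V → F}
    {N' : W → F} (hN' : ∀ w, star (N' w) = N' w)
    (he : ∀ c w, N (e (w, c)) = star c * c + N' w) :
    Nat.card {v // N v = 1} + q * Nat.card {w // N' w = 1} = (q + 1) * Nat.card W := by
  classical
  have := Fintype.ofFinite W
  have hfiber : ∀ w, Nat.card {c : F // star c * c + N' w = 1} + (if N' w = 1 then q else 0) =
      q + 1 := fun w => by
    split_ifs with hw
    · simp [hw, add_comm]
    · simp_rw [← eq_sub_iff_add_eq]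
      simpa using card_star_mul_self_eq hF hstar (a := 1 - N' w) (by simp [hN'])
        (sub_ne_zero.2 (Ne.symm hw))
  have hsigma : Nat.card {v // N v = 1} = ∑ w, Nat.card {c : F // star c * c + N' w = 1} := by
    rw [← Nat.card_sigma]
    refine Nat.card_congr (.trans (e.subtypeEquiv fun p => ?_).symm
      (Equiv.subtypeProdEquivSigmaSubtype fun w c => star c * c + N' w = 1))
    rw [← he]
  have hN'_card : q * Nat.card {w // N' w = 1} = ∑ w, if N' w = 1 then q else 0 := by
    rw [Finset.sum_ite, Finset.sum_const_zero, add_zero, Finset.sum_const, smul_eq_mul, mul_comm,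
      Nat.card_eq_fintype_card, Fintype.card_subtype]
  rw [hsigma, hN'_card, ← Finset.sum_add_distrib, Finset.sum_congr rfl fun w _ => hfiber w]
  simp [mul_comm]

variable {ι : Type*} [Fintype ι]

/-- The orthogonal complement of the vector `u` for the Hermitian form `⟪v, w⟫ = star v ⬝ᵥ w`. -/
def hermitianPerp (u : ι → F) : Submodule F (ι → F) where
  carrier := {v | star u ⬝ᵥ v = 0}
  add_mem' hv hw := by simp_all
  zero_mem' := by simp
  smul_mem' c v hv := by simp_all

/-- The vectors of Hermitian norm `1` in the subspace `U`. -/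
def unitVectors (U : Submodule F (ι → F)) : Set (ι → F) :=
  {v | v ∈ U ∧ star v ⬝ᵥ v = 1}

theorem card_unitVectors_top [Finite F] (hF : Nat.card F = q ^ 2)
    (hstar : ∀ x : F, star x = x ^ q) (n : ℕ) :
    (q : ℤ) * Nat.card (unitVectors (⊤ : Submodule F (Fin n → F))) = q ^ (2 * n) - (-q) ^ n := by
  have hcard : ∀ n, Nat.card (unitVectors (⊤ : Submodule F (Fin n → F))) =
      Nat.card {v : Fin n → F // star v ⬝ᵥ v = 1} := fun n =>
    Nat.card_congr (Equiv.subtypeEquivRight fun v => and_iff_right Submodule.mem_top)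
  rw [hcard]
  induction n with
  | zero => simp
  | succ n ih =>
    have h := card_eq_one_add_mul_card_eq_one_of_prod_equiv hF hstar
      ((Equiv.prodComm _ _).trans (Fin.consEquiv fun _ : Fin (n + 1) => F))
      (N := fun v => star v ⬝ᵥ v) (N' := fun v => star v ⬝ᵥ v)
      (fun w => (star_dotProduct w w).symm) (fun w c => by simp [dotProduct, Fin.sum_univ_succ])
    rw [Nat.card_fun, hF, Nat.card_fin, ← pow_mul] at h
    zify at h
    linear_combination (q : ℤ) * h - q * ih

/-- The ordered orthonormal families of `m` vectors of `U` for the form `star v ⬝ᵥ w`. -/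
def orthonormalFrames (U : Submodule F (ι → F)) (m : ℕ) : Set (Fin m → ι → F) :=
  {f | (∀ i, f i ∈ U) ∧ ∀ i j, star (f i) ⬝ᵥ f j = if i = j then 1 else 0}

variable {U : Submodule F (ι → F)} {u : ι → F}

theorem mem_hermitianPerp {v : ι → F} : v ∈ hermitianPerp u ↔ star u ⬝ᵥ v = 0 :=
  Iff.rfl

theorem dotProduct_eq_zero_of_mem_hermitianPerp {v : ι → F} (hv : v ∈ hermitianPerp u) :
    star v ⬝ᵥ u = 0 := by
  rw [star_dotProduct, mem_hermitianPerp.1 hv, star_zero]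

/-- The decomposition `U = (U ∩ u^⊥) ⊕ Fu` of a subspace along one of its unit vectors. -/
def hermitianPerpProdEquiv (hu : u ∈ unitVectors U) : ↥(U ⊓ hermitianPerp u) × F ≃ U where
  toFun p := ⟨p.1 + p.2 • u, U.add_mem p.1.2.1 (U.smul_mem _ hu.1)⟩
  invFun v := (⟨v - (star u ⬝ᵥ v) • u, U.sub_mem v.2 (U.smul_mem _ hu.1),
    by simp [mem_hermitianPerp, hu.2]⟩, star u ⬝ᵥ v)
  left_inv p := by
    have hw := mem_hermitianPerp.1 p.1.2.2
    ext <;> simp [hw, hu.2]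
  right_inv v := by simp

theorem card_inf_hermitianPerp_mul (hu : u ∈ unitVectors U) :
    Nat.card ↥(U ⊓ hermitianPerp u) * Nat.card F = Nat.card U := by
  rw [← Nat.card_prod, Nat.card_congr (hermitianPerpProdEquiv hu)]

theorem card_unitVectors_inf_hermitianPerp [Finite F] (hF : Nat.card F = q ^ 2)
    (hstar : ∀ x : F, star x = x ^ q) (hu : u ∈ unitVectors U) :
    Nat.card (unitVectors U) + q * Nat.card (unitVectors (U ⊓ hermitianPerp u)) =
      (q + 1) * Nat.card ↥(U ⊓ hermitianPerp u) := by
  have h := card_eq_one_add_mul_card_eq_one_of_prod_equiv hF hstar (hermitianPerpProdEquiv hu)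
    (N := fun v => star (v : ι → F) ⬝ᵥ v) (N' := fun w => star (w : ι → F) ⬝ᵥ w)
    (fun w => (star_dotProduct (w : ι → F) w).symm) (fun c w => by
      have hw := mem_hermitianPerp.1 w.2.2
      have hw' := dotProduct_eq_zero_of_mem_hermitianPerp w.2.2
      simp [hermitianPerpProdEquiv, hw, hw', hu.2, add_comm, mul_comm])
  rw [← h]
  congr 1
  · exact Nat.card_congr (Equiv.subtypeSubtypeEquivSubtypeInter (· ∈ U) _).symm
  · congr 1
    exact Nat.card_congr (Equiv.subtypeSubtypeEquivSubtypeInter (· ∈ U ⊓ hermitianPerp u) _).symm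

theorem cons_mem_orthonormalFrames {m : ℕ} {f : Fin m → ι → F} :
    Fin.cons u f ∈ orthonormalFrames U (m + 1) ↔
      u ∈ unitVectors U ∧ f ∈ orthonormalFrames (U ⊓ hermitianPerp u) m := by
  have hperp : (∀ i, star (f i) ⬝ᵥ u = 0) ↔ ∀ i, star u ⬝ᵥ f i = 0 :=
    forall_congr' fun i => by rw [star_dotProduct, star_eq_zero]
  simp only [orthonormalFrames, unitVectors, Set.mem_ofPred_eq, Fin.forall_fin_succ, Fin.cons_zero,
    Fin.cons_succ, Submodule.mem_inf, mem_hermitianPerp, forall_and, Fin.succ_inj, Fin.succ_ne_zero,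
    (Fin.succ_ne_zero _).symm, if_true, if_false, hperp]
  tauto

theorem card_orthonormalFrames_succ [Finite F] (U : Submodule F (ι → F)) (m : ℕ)
    [Fintype (unitVectors U)] :
    Nat.card (orthonormalFrames U (m + 1)) =
      ∑ u : unitVectors U, Nat.card (orthonormalFrames (U ⊓ hermitianPerp (u : ι → F)) m) := by
  have hmem : ∀ g ∈ orthonormalFrames U (m + 1), g 0 ∈ unitVectors U ∧
      Fin.tail g ∈ orthonormalFrames (U ⊓ hermitianPerp (g 0)) m := fun g hg =>
    cons_mem_orthonormalFrames.1 (by rwa [Fin.cons_self_tail])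
  rw [← Nat.card_sigma]
  exact Nat.card_congr
    { toFun g := ⟨⟨g.1 0, (hmem g.1 g.2).1⟩, ⟨Fin.tail g.1, (hmem g.1 g.2).2⟩⟩
      invFun p := ⟨Fin.cons p.1.1 p.2.1, cons_mem_orthonormalFrames.2 ⟨p.1.2, p.2.2⟩⟩
      left_inv g := Subtype.ext (Fin.cons_self_tail g.1)
      right_inv p := rfl }

/- The induction carries the two counts `hU` and `hU_unit` of a nondegenerate Hermitian space of
dimension `m` to the complement of a unit vector, in place of dimension and nondegeneracy. -/
theorem card_orthonormalFrames [Finite F] (hF : Nat.card F = q ^ 2)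
    (hstar : ∀ x : F, star x = x ^ q) (m : ℕ) (U : Submodule F (ι → F))
    (hU : Nat.card U = q ^ (2 * m))
    (hU_unit : (q : ℤ) * Nat.card (unitVectors U) = q ^ (2 * m) - (-q) ^ m) :
    (Nat.card (orthonormalFrames U m) : ℤ) =
      ∏ i ∈ Finset.range m, (q : ℤ) ^ i * (q ^ (i + 1) - (-1) ^ (i + 1)) := by
  have hq : 0 < q := Nat.pos_of_ne_zero (ne_zero_pow two_ne_zero (hF ▸ Nat.card_pos.ne'))
  have hq' : (q : ℤ) ≠ 0 := mod_cast hq.ne'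
  induction m generalizing U with
  | zero =>
    have : orthonormalFrames U 0 = Set.univ :=
      Set.eq_univ_of_forall fun f => ⟨finZeroElim, finZeroElim⟩
    simp [this]
  | succ m ih =>
    have := Fintype.ofFinite (unitVectors U)
    have hfiber : ∀ u : unitVectors U,
        (Nat.card (orthonormalFrames (U ⊓ hermitianPerp (u : ι → F)) m) : ℤ) =
          ∏ i ∈ Finset.range m, (q : ℤ) ^ i * (q ^ (i + 1) - (-1) ^ (i + 1)) := fun u => by
      have hW : Nat.card ↥(U ⊓ hermitianPerp (u : ι → F)) = q ^ (2 * m) := by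
        have h := card_inf_hermitianPerp_mul u.2
        rw [hU, hF, mul_add, pow_add] at h
        exact Nat.eq_of_mul_eq_mul_right (by positivity) h
      refine ih _ hW ?_
      have h := card_unitVectors_inf_hermitianPerp hF hstar u.2
      rw [hW] at h
      zify at h
      refine mul_left_cancel₀ hq' ?_
      linear_combination (q : ℤ) * h - hU_unit
    have hunits : (Nat.card (unitVectors U) : ℤ) = q ^ m * (q ^ (m + 1) - (-1) ^ (m + 1)) := by
      refine mul_left_cancel₀ hq' ?_
      rw [hU_unit, neg_pow]
      ring
    rw [card_orthonormalFrames_succ, Nat.cast_sum, Finset.sum_congr rfl fun u _ => hfiber u,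
      Finset.prod_range_succ, Finset.sum_const, Finset.card_univ, ← Nat.card_eq_fintype_card,
      nsmul_eq_mul, hunits, mul_comm]

theorem card_unitaryGroup [Finite F] (hF : Nat.card F = q ^ 2) (hstar : ∀ x : F, star x = x ^ q)
    (n : ℕ) : (Nat.card (unitaryGroup (Fin n) F) : ℤ) =
      ∏ i ∈ Finset.range n, (q : ℤ) ^ i * (q ^ (i + 1) - (-1) ^ (i + 1)) := by
  have hframes : Nat.card (unitaryGroup (Fin n) F) =
      Nat.card (orthonormalFrames (⊤ : Submodule F (Fin n → F)) n) := by
    refine Nat.card_congr ((transposeAddEquiv (Fin n) (Fin n) F).toEquiv.subtypeEquiv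
      (p := (· ∈ unitaryGroup (Fin n) F)) fun A => ?_)
    rw [mem_unitaryGroup_iff', ← Matrix.ext_iff]
    exact (and_iff_right fun _ => Submodule.mem_top).symm
  rw [hframes]
  refine card_orthonormalFrames hF hstar n ⊤ ?_ (card_unitVectors_top hF hstar n)
  rw [Nat.card_congr Submodule.topEquiv.toEquiv, Nat.card_fun, hF, Nat.card_fin, pow_mul]

end HermitianCounting

section CharTwo

theorem isFermatSimilitude_of_transpose_map_sq_mul {n R : Type*} [Fintype n] [DecidableEq n]
    [CommRing R] [CharP R 2] {c : R} {A : Matrix n n R} (hA : (A.map (· ^ 2))ᵀ * A = c • 1) :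
    IsFermatSimilitude c A := by
  let x : n → MvPolynomial n R := X
  have htoMv : ∀ i, A.toMvPolynomial i = (A.map C *ᵥ x) i := fun i => by
    simp only [toMvPolynomial, mulVec, dotProduct, map_apply, ← C_mul_X_eq_monomial, x]
  have hsq : ∀ i, A.toMvPolynomial i ^ 2 = ((A.map (· ^ 2)).map C *ᵥ x ^ 2) i := fun i => by
    simp [htoMv, mulVec, dotProduct, CharTwo.sum_sq, mul_pow]
  calc ∑ i, A.toMvPolynomial i ^ 3
      = (((A.map (· ^ 2)).map C) *ᵥ x ^ 2) ⬝ᵥ (A.map C *ᵥ x) :=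
        Finset.sum_congr rfl fun i _ => by rw [pow_succ, hsq, htoMv]
    _ = x ^ 2 ⬝ᵥ (((A.map (· ^ 2))ᵀ * A).map C *ᵥ x) := by
        rw [Matrix.map_mul, ← mulVec_mulVec, dotProduct_mulVec (x ^ 2), transpose_map,
          vecMul_transpose]
    _ = C c * ∑ i, (X i : MvPolynomial n R) ^ 3 := by
        rw [hA, smul_one_eq_diagonal, diagonal_map C_0]
        simp [dotProduct, mulVec_diagonal, x, Finset.mul_sum, pow_succ, mul_left_comm, mul_assoc]

variable {k : Type*} [Field k] [CharP k 2]

theorem three_ne_zero_of_charP_two : (3 : k) ≠ 0 := by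
  rw [← two_add_one_eq_three, CharTwo.two_eq_zero, zero_add]
  exact one_ne_zero

/- With `S` the entrywise square of `A`, squaring the entries of `Sᵀ * A = c • 1` and transposing
gives `Sᵀ * A⁽⁴⁾ = c ^ 2 • 1 = Sᵀ * (c • A)`, and `Sᵀ` is invertible. -/
theorem IsFermatSimilitude.pow_four_apply {n : Type*} [Fintype n] {c : k} {A : Matrix n n k}
    (hc : c ≠ 0) (hA : IsFermatSimilitude c A) (i j : n) : A i j ^ 4 = c * A i j := by
  classical
  let S := A.map (· ^ 2)
  have hS : Sᵀ * A = c • 1 := hA.transpose_map_sq_mul three_ne_zero_of_charP_two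
  have hS_unit : IsUnit Sᵀ := by
    rw [isUnit_iff_isUnit_det]
    refine isUnit_of_mul_isUnit_left (y := A.det) ?_
    rw [← det_mul, hS, det_smul, det_one, mul_one]
    exact (pow_ne_zero _ hc).isUnit
  have hS_sq : Sᵀ * S.map (· ^ 2) = c ^ 2 • 1 :=
    calc Sᵀ * S.map (· ^ 2) = ((Sᵀ * A).map (frobenius k 2))ᵀ := by
          rw [Matrix.map_mul, transpose_mul]
          rfl
      _ = c ^ 2 • 1 := by simp [hS, smul_one_eq_diagonal, frobenius_def]
  have hS_eq : S.map (· ^ 2) = c • A := hS_unit.mul_left_cancel <| by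
    rw [hS_sq, Matrix.mul_smul, hS, smul_smul, sq]
  simpa [S, ← pow_mul] using congrFun₂ hS_eq i j

variable (k) in
/-- The subfield `{x | x ^ 4 = x}` of `k`, which has four elements when `k` contains a primitive
cube root of unity. -/
def fourSubfield : Subfield k :=
  (iterateFrobenius k 2 2).eqLocusField (RingHom.id k)

theorem mem_fourSubfield {x : k} : x ∈ fourSubfield k ↔ x ^ 4 = x :=
  Iff.rfl

instance : CharP (fourSubfield k) 2 :=
  CharP.subring' _ _ _

instance : StarRing (fourSubfield k) where
  star x := x ^ 2
  star_involutive x := Subtype.ext (by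
    simpa only [SubmonoidClass.coe_pow, ← pow_mul] using mem_fourSubfield.1 x.2)
  star_mul x y := by rw [mul_pow, mul_comm]
  star_add x y := add_pow_char x y 2

theorem card_fourSubfield {ω : k} (hω : IsPrimitiveRoot ω 3) : Nat.card (fourSubfield k) = 4 := by
  classical
  have hset : (fourSubfield k : Set k) = (insert 0 (Polynomial.nthRootsFinset 3 1) : Finset k) := by
    ext x
    rw [SetLike.mem_coe, mem_fourSubfield, pow_succ, mul_left_eq_self₀, or_comm]
    simp
  rw [← SetLike.coe_sort_coe, hset, Nat.card_coe_set_eq, Set.ncard_coe_finset,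
    Finset.card_insert_of_notMem (by simp), hω.card_nthRootsFinset]

theorem isFermatSimilitude_one_map_subtype_iff {n : Type*} [Fintype n] [DecidableEq n]
    {B : Matrix n n (fourSubfield k)} :
    IsFermatSimilitude 1 (B.map (fourSubfield k).subtype) ↔
      B ∈ unitaryGroup n (fourSubfield k) := by
  have hmap : ((B.map (fourSubfield k).subtype).map (· ^ 2))ᵀ * B.map (fourSubfield k).subtype =
      (star B * B).map (fourSubfield k).subtype := by
    rw [Matrix.map_mul]
    rfl
  have hone : (1 : Matrix n n (fourSubfield k)).map (fourSubfield k).subtype = 1 :=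
    Matrix.map_one _ (map_zero _) (map_one _)
  rw [mem_unitaryGroup_iff', ← (map_injective (fourSubfield k).subtype_injective).eq_iff, hone,
    ← hmap]
  refine ⟨fun h => ?_, fun h => ?_⟩
  · simpa using h.transpose_map_sq_mul three_ne_zero_of_charP_two
  · exact isFermatSimilitude_of_transpose_map_sq_mul (by rw [h, one_smul])

theorem ncard_isFermatSimilitude_one_of_charP_two {ω : k} (hω : IsPrimitiveRoot ω 3) (n : ℕ) :
    ({A : Matrix (Fin n) (Fin n) k | IsFermatSimilitude 1 A}.ncard : ℤ) =
      ∏ i ∈ Finset.range n, (2 : ℤ) ^ i * (2 ^ (i + 1) - (-1) ^ (i + 1)) := by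
  have hcard := card_fourSubfield hω
  have : Finite (fourSubfield k) := Nat.finite_of_card_ne_zero (by simp [hcard])
  have himage : {A : Matrix (Fin n) (Fin n) k | IsFermatSimilitude 1 A} =
      (fun B => B.map (fourSubfield k).subtype) ''
        (unitaryGroup (Fin n) (fourSubfield k) : Set (Matrix (Fin n) (Fin n) _)) := by
    ext A
    constructor
    · intro hA
      have hmem : ∀ i j, A i j ∈ fourSubfield k := fun i j => by
        rw [mem_fourSubfield, hA.pow_four_apply one_ne_zero, one_mul]
      exact ⟨of fun i j => ⟨A i j, hmem i j⟩, isFermatSimilitude_one_map_subtype_iff.1 hA, rfl⟩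
    · rintro ⟨B, hB, rfl⟩
      exact isFermatSimilitude_one_map_subtype_iff.2 hB
  rw [himage, Set.ncard_image_of_injective _ (map_injective (fourSubfield k).subtype_injective)]
  exact card_unitaryGroup (q := 2) hcard (fun _ => rfl) n

end CharTwo

section Projective

variable {n k : Type*} [Fintype n] [Field k]

theorem ncard_mk_image_mul_card_inf {G : Type*} [Group G] (N H : Subgroup G) [N.Normal] :
    (QuotientGroup.mk '' (H : Set G) : Set (G ⧸ N)).ncard * Nat.card ↥(N ⊓ H) = Nat.card H := by
  have himage : (QuotientGroup.mk '' (H : Set G) : Set (G ⧸ N)).ncard = N.relIndex H := by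
    conv_rhs => rw [← QuotientGroup.ker_mk' N, Subgroup.relIndex_ker]
    rfl
  rw [himage, ← Subgroup.inf_relIndex_right, mul_comm, ← Subgroup.relIndex_bot_left,
    Subgroup.relIndex_mul_relIndex _ _ _ bot_le inf_le_right, Subgroup.relIndex_bot_left]

theorem IsFermatSimilitude.exists_pow_three_eq [Nonempty n] {c : k} {A : Matrix n n k}
    (h3 : (3 : k) ≠ 0) (hc : c ≠ 0) (hA : IsFermatSimilitude c A) : ∃ a, a ^ 3 = c := by
  classical
  let j := Classical.arbitrary n
  by_cases h2 : (2 : k) = 0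
  · have := CharTwo.of_one_ne_zero_of_two_eq_zero one_ne_zero h2
    have hcol : ∃ i, A i j ≠ 0 := by
      by_contra! hcol
      exact (hA.isUnit_det h3 hc).ne_zero (det_eq_zero_of_column_eq_zero j hcol)
    obtain ⟨i, hi⟩ := hcol
    exact ⟨A i j, mul_right_cancel₀ hi (by rw [← pow_succ, hA.pow_four_apply hc])⟩
  · obtain ⟨_, d, hd, _⟩ := hA.exists_eq_submatrix_diagonal h2 h3 hc
    exact ⟨d j, hd j⟩

variable [DecidableEq n]

variable (n k) in
/-- The linear automorphisms that preserve the Fermat cubic form `∑ xᵢ³` itself, and not merely up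
to a scalar. -/
def fermatIsometryGroup : Subgroup (GL n k) where
  carrier := {A | IsFermatSimilitude 1 (A : Matrix n n k)}
  one_mem' := IsFermatSimilitude.one
  mul_mem' hA hB := by simpa using IsFermatSimilitude.mul hA hB
  inv_mem' {A} hA := IsFermatSimilitude.of_mul_eq_one hA A.mul_inv

theorem mem_fermatIsometryGroup {A : GL n k} :
    A ∈ fermatIsometryGroup n k ↔ IsFermatSimilitude 1 (A : Matrix n n k) :=
  Iff.rfl

theorem card_fermatIsometryGroup (h3 : (3 : k) ≠ 0) :
    Nat.card (fermatIsometryGroup n k) = {A : Matrix n n k | IsFermatSimilitude 1 A}.ncard := by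
  have himage : {A : Matrix n n k | IsFermatSimilitude 1 A} =
      Units.val '' (fermatIsometryGroup n k : Set (GL n k)) := by
    refine Set.Subset.antisymm (fun A hA => ?_) (Set.image_subset_iff.2 fun A hA => hA)
    exact ⟨nonsingInvUnit A (hA.isUnit_det h3 one_ne_zero), hA, rfl⟩
  rw [himage, Set.ncard_image_of_injective _ Units.val_injective, ← Nat.card_coe_set_eq]
  rfl

theorem comap_algebraMap_fermatIsometryGroup [Nonempty n] (h3 : (3 : k) ≠ 0) :
    (fermatIsometryGroup n k).comap (Units.map (algebraMap k (Matrix n n k)).toMonoidHom) =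
      rootsOfUnity 3 k := by
  ext a
  rw [Subgroup.mem_comap, mem_fermatIsometryGroup, mem_rootsOfUnity']
  change IsFermatSimilitude 1 (algebraMap k (Matrix n n k) a) ↔ _
  rw [Algebra.algebraMap_eq_smul_one]
  constructor
  · intro ha
    obtain ⟨i⟩ := ‹Nonempty n›
    simpa [mul_apply, one_apply, pow_succ] using congrFun₂ (ha.transpose_map_sq_mul h3) i i
  · intro ha
    simpa [ha] using (IsFermatSimilitude.one (R := k) (n := n)).smul (a : k)

theorem scalarSubgroup_eq_center : scalarSubgroup k = Subgroup.center (GL (Fin 4) k) := by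
  rw [GeneralLinearGroup.center_eq_range_scalar]
  rfl

instance : (scalarSubgroup k).Normal :=
  scalarSubgroup_eq_center (k := k) ▸ inferInstance

theorem card_scalarSubgroup_inf_fermatIsometryGroup {ω : k} (hω : IsPrimitiveRoot ω 3) :
    Nat.card ↥(scalarSubgroup k ⊓ fermatIsometryGroup (Fin 4) k) = 3 := by
  have hinj : Function.Injective
      (Units.map (algebraMap k (Matrix (Fin 4) (Fin 4) k)).toMonoidHom) :=
    Units.map_injective (algebraMap k _).injective
  rw [scalarSubgroup, ← Subgroup.map_comap_eq, comap_algebraMap_fermatIsometryGroup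
    (three_ne_zero_of_isPrimitiveRoot hω), Subgroup.card_map_of_injective hinj,
    hω.card_rootsOfUnity]

variable (k) in
/-- The stabilizer of the Fermat cubic surface `x₀³ + x₁³ + x₂³ + x₃³ = 0` in `PGL₄(k)`. -/
def fermatStabilizer : Set (GL (Fin 4) k ⧸ scalarSubgroup k) :=
  QuotientGroup.mk '' {A : GL (Fin 4) k | LeavesInvariant (A : Matrix (Fin 4) (Fin 4) k)
    (X 0 ^ 3 + X 1 ^ 3 + X 2 ^ 3 + X 3 ^ 3)}

theorem leavesInvariant_fermat_iff {A : Matrix (Fin 4) (Fin 4) k} :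
    LeavesInvariant A (X 0 ^ 3 + X 1 ^ 3 + X 2 ^ 3 + X 3 ^ 3) ↔
      ∃ c : kˣ, IsFermatSimilitude (c : k) A := by
  have hsubst : substMatrix A (X 0 ^ 3 + X 1 ^ 3 + X 2 ^ 3 + X 3 ^ 3) =
      ∑ i, A.toMvPolynomial i ^ 3 := by
    simp [substMatrix, toMvPolynomial, C_mul_X_eq_monomial, Fin.sum_univ_four]
  simp only [LeavesInvariant, IsFermatSimilitude, hsubst, smul_eq_C_mul,
    Fin.sum_univ_four fun i => (X i : MvPolynomial (Fin 4) k) ^ 3]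

theorem fermatStabilizer_eq_image_fermatIsometryGroup (h3 : (3 : k) ≠ 0) :
    fermatStabilizer k = QuotientGroup.mk '' (fermatIsometryGroup (Fin 4) k : Set _) := by
  refine Set.Subset.antisymm ?_ (Set.image_mono fun A hA => leavesInvariant_fermat_iff.2 ⟨1, hA⟩)
  rintro _ ⟨A, hA, rfl⟩
  obtain ⟨c, hc⟩ := leavesInvariant_fermat_iff.1 hA
  obtain ⟨a, ha⟩ := hc.exists_pow_three_eq h3 c.ne_zero
  have ha0 : a ≠ 0 := fun h => c.ne_zero (by rw [← ha, h, zero_pow three_ne_zero])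
  let s : GL (Fin 4) k := Units.map (algebraMap k _).toMonoidHom (Units.mk0 a ha0)⁻¹
  refine ⟨A * s, ?_, QuotientGroup.mk_mul_of_mem A ⟨_, rfl⟩⟩
  have hs : ((A * s : GL (Fin 4) k) : Matrix (Fin 4) (Fin 4) k) = a⁻¹ • A := by
    rw [Algebra.smul_def, Algebra.commutes]
    rfl
  rw [SetLike.mem_coe, mem_fermatIsometryGroup, hs]
  simpa [← ha, ha0] using hc.smul a⁻¹

theorem three_mul_ncard_fermatStabilizer {ω : k} (hω : IsPrimitiveRoot ω 3) :
    3 * (fermatStabilizer k).ncard =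
      {A : Matrix (Fin 4) (Fin 4) k | IsFermatSimilitude 1 A}.ncard := by
  have h3 := three_ne_zero_of_isPrimitiveRoot hω
  rw [fermatStabilizer_eq_image_fermatIsometryGroup h3, ← card_fermatIsometryGroup h3,
    ← ncard_mk_image_mul_card_inf (scalarSubgroup k),
    card_scalarSubgroup_inf_fermatIsometryGroup hω, mul_comm]

end Projective

theorem exists_isPrimitiveRoot_three {k : Type*} [Field k] [IsAlgClosed k] (h3 : ringChar k ≠ 3) :
    ∃ ω : k, IsPrimitiveRoot ω 3 := by
  have : NeZero ((3 : ℕ) : k) := ⟨fun h => h3 (CharP.ringChar_of_prime_eq_zero Nat.prime_three h)⟩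
  exact HasEnoughRootsOfUnity.exists_primitiveRoot k 3

theorem stmt11_general {k : Type*} [Field k] (hω : ∃ ω : k, IsPrimitiveRoot ω 3) :
    (ringChar k ≠ 2 → (fermatStabilizer k).Finite ∧ (fermatStabilizer k).ncard = 648) ∧
      (ringChar k = 2 → (fermatStabilizer k).Finite ∧ (fermatStabilizer k).ncard = 25920) := by
  obtain ⟨ω, hω⟩ := hω
  have hcard := three_mul_ncard_fermatStabilizer hω
  refine ⟨fun h2 => ?_, fun h2 => ?_⟩
  · have h648 : (fermatStabilizer k).ncard = 648 := by
      rw [ncard_isFermatSimilitude_one_of_two_ne_zero hω (Ring.two_ne_zero h2),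
        Fintype.card_fin] at hcard
      norm_num [Nat.factorial] at hcard
      lia
    exact ⟨Set.finite_of_ncard_ne_zero (by simp [h648]), h648⟩
  · have : CharP k 2 := ringChar.of_eq h2
    have h25920 : (fermatStabilizer k).ncard = 25920 := by
      have h := ncard_isFermatSimilitude_one_of_charP_two hω 4
      norm_num [← hcard, Finset.prod_range_succ] at h
      lia
    exact ⟨Set.finite_of_ncard_ne_zero (by simp [h25920]), h25920⟩

/-- The stabilizer of the Fermat cubic surface
`V(x₀³+x₁³+x₂³+x₃³)` in `PGL₄(k)` has cardinality `648` when
`char k ∉ {2,3}` (it is `3³ ⋊ S₄`), and cardinality `25920` when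
`char k = 2` (it is the simple group `PSU₄(2)`). -/
theorem stmt11 {k : Type*} [Field k] [IsAlgClosed k] :
    (ringChar k ≠ 2 → ringChar k ≠ 3 →
      ((QuotientGroup.mk :
          GL (Fin 4) k → GL (Fin 4) k ⧸ scalarSubgroup k) ''
          {A : GL (Fin 4) k | LeavesInvariant (A : Matrix (Fin 4) (Fin 4) k)
            (X 0 ^ 3 + X 1 ^ 3 + X 2 ^ 3 + X 3 ^ 3 : MvPolynomial (Fin 4) k)}).Finite ∧
      ((QuotientGroup.mk :
          GL (Fin 4) k → GL (Fin 4) k ⧸ scalarSubgroup k) ''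
          {A : GL (Fin 4) k | LeavesInvariant (A : Matrix (Fin 4) (Fin 4) k)
            (X 0 ^ 3 + X 1 ^ 3 + X 2 ^ 3 + X 3 ^ 3 : MvPolynomial (Fin 4) k)}).ncard
        = 648) ∧
    (ringChar k = 2 →
      ((QuotientGroup.mk :
          GL (Fin 4) k → GL (Fin 4) k ⧸ scalarSubgroup k) ''
          {A : GL (Fin 4) k | LeavesInvariant (A : Matrix (Fin 4) (Fin 4) k)
            (X 0 ^ 3 + X 1 ^ 3 + X 2 ^ 3 + X 3 ^ 3 : MvPolynomial (Fin 4) k)}).Finite ∧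
      ((QuotientGroup.mk :
          GL (Fin 4) k → GL (Fin 4) k ⧸ scalarSubgroup k) ''
          {A : GL (Fin 4) k | LeavesInvariant (A : Matrix (Fin 4) (Fin 4) k)
            (X 0 ^ 3 + X 1 ^ 3 + X 2 ^ 3 + X 3 ^ 3 : MvPolynomial (Fin 4) k)}).ncard
        = 25920) :=
  ⟨fun h2 h3 => (stmt11_general (exists_isPrimitiveRoot_three h3)).1 h2,
    fun h2 => (stmt11_general (exists_isPrimitiveRoot_three (by simp [h2]))).2 h2⟩
end

section
/- Let F₄ be the finite field with 4 elements. (i) The number of 1-dimensional F₄-linear subspaces L ⊆ F₄⁴ such that x₀³ + x₁³ + x₂³ + x₃³ = 0 for every x ∈ L is exactly 45. (ii) The number of 2-dimensional F₄-linear subspaces W ⊆ F₄⁴ such that x₀³ + x₁³ + x₂³ + x₃³ = 0 for every x ∈ W is exactly 27. -/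
/-!
The Fermat cubic over `F₄` is the Hermitian surface `∑ N(xᵢ) = 0` for the norm `N(x) = x ^ (q + 1)`
of a quadratic extension `K / F` of finite fields, `q = |F|`. Since `N` is `(q + 1)`-to-one over
`Fˣ`, the number of isotropic vectors is computed by induction on the dimension.

A subspace contained in the surface is totally isotropic for the sesquilinear form
`B(x, y) = ∑ xᵢ ^ q * yᵢ`, so points and lines are counted by their bases. For a fixed isotropic
`v ≠ 0`, each affine line `w + K v` with `B(v, w) ≠ 0` contains exactly `q` isotropic vectors,
because the trace is `q`-to-one and `N(w + c v) = N(w) + Tr(c B(w, v))`. Subtraction then gives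
the number of isotropic `w` orthogonal to `v`.
-/

open Module (finrank)

section Counting

theorem card_mul_eq_card_mul_of_rel {α β : Type*} [Finite α] [Finite β] (r : α → β → Prop)
    {m n : ℕ} (hm : ∀ a, Nat.card {b // r a b} = m) (hn : ∀ b, Nat.card {a // r a b} = n) :
    Nat.card α * m = Nat.card β * n := by
  classical
  have := Fintype.ofFinite α
  have := Fintype.ofFinite β
  have habove (a) : (Finset.univ.bipartiteAbove r a).card = m := by
    rw [← hm a, Nat.card_eq_fintype_card, Fintype.card_subtype, Finset.bipartiteAbove]
  have hbelow (b) : (Finset.univ.bipartiteBelow r b).card = n := by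
    rw [← hn b, Nat.card_eq_fintype_card, Fintype.card_subtype, Finset.bipartiteBelow]
  simpa [Nat.card_eq_fintype_card] using
    Finset.card_mul_eq_card_mul r (fun a _ => habove a) (fun b _ => hbelow b)

theorem card_eq_card_mul_of_card_fiber {α β : Type*} [Finite α] [Finite β] (f : α → β) {n : ℕ}
    (hn : ∀ b, Nat.card {a // f a = b} = n) : Nat.card α = Nat.card β * n := by
  simpa using card_mul_eq_card_mul_of_rel (f · = ·) (m := 1) (by simp) hn

theorem card_subtype_add_card_subtype_not {α : Type*} [Finite α] (r : α → Prop) :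
    Nat.card {a // r a} + Nat.card {a // ¬r a} = Nat.card α :=
  Set.ncard_add_ncard_compl {a | r a}

theorem card_subtype_and_add_card_subtype_and_not {α : Type*} [Finite α] (p r : α → Prop) :
    Nat.card {a // p a ∧ r a} + Nat.card {a // p a ∧ ¬r a} = Nat.card {a // p a} :=
  Set.ncard_inter_add_ncard_sdiff_eq_ncard {a | p a} {a | r a}

@[to_additive]
theorem card_monoidHom_fiber {G H : Type*} [Group G] [Group H] {f : G →* H}
    (hf : Function.Surjective f) (y : H) : Nat.card {x // f x = y} * Nat.card H = Nat.card G := by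
  have hfiber : Nat.card {x // f x = y} = Nat.card f.ker :=
    Nat.card_congr (MonoidHom.fiberEquivKerOfSurjective hf y)
  rw [hfiber, ← f.ker.card_mul_index, Subgroup.index_ker, MonoidHom.range_eq_top.2 hf,
    Subgroup.card_top]

end Counting

section Bases

variable {K V : Type*} [Field K] [Finite K] [AddCommGroup V] [Module K V] [Finite V]

theorem card_linearIndependent_span_eq {W : Submodule K V} {k : ℕ} (hW : finrank K W = k) :
    Nat.card {s : Fin k → V // LinearIndependent K s ∧ Submodule.span K (Set.range s) = W} =
      ∏ i : Fin k, (Nat.card K ^ k - Nat.card K ^ (i : ℕ)) := by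
  have := Fintype.ofFinite K
  have e : {s : Fin k → V // LinearIndependent K s ∧ Submodule.span K (Set.range s) = W} ≃
      {t : Fin k → W // LinearIndependent K t} :=
    { toFun s := ⟨fun i => ⟨s.1 i, s.2.2.le (Submodule.subset_span ⟨i, rfl⟩)⟩,
        LinearIndependent.of_comp W.subtype s.2.1⟩
      invFun t := ⟨W.subtype ∘ t.1, t.2.map' _ W.ker_subtype, by
        rw [Set.range_comp, Submodule.span_image,
          t.2.span_eq_top_of_card_eq_finrank' (by simp [hW]), Submodule.map_subtype_top]⟩
      left_inv _ := rfl
      right_inv _ := rfl }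
  rw [Nat.card_congr e, card_linearIndependent hW.ge, hW, Nat.card_eq_fintype_card]

theorem card_linearIndependent_and_span (k : ℕ) (P : Submodule K V → Prop) :
    Nat.card {s : Fin k → V // LinearIndependent K s ∧ P (Submodule.span K (Set.range s))} =
      Nat.card {W : Submodule K V // finrank K W = k ∧ P W} *
        ∏ i : Fin k, (Nat.card K ^ k - Nat.card K ^ (i : ℕ)) := by
  let span (s : {s : Fin k → V // LinearIndependent K s ∧ P (Submodule.span K (Set.range s))}) :
      {W : Submodule K V // finrank K W = k ∧ P W} :=
    ⟨Submodule.span K (Set.range s.1), by simpa using finrank_span_eq_card s.2.1, s.2.2⟩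
  refine card_eq_card_mul_of_card_fiber span fun W => ?_
  rw [← card_linearIndependent_span_eq W.2.1]
  exact Nat.card_congr
    { toFun s := ⟨s.1.1, s.1.2.1, congrArg Subtype.val s.2⟩
      invFun s := ⟨⟨s.1, s.2.1, s.2.2.symm ▸ W.2.2⟩, Subtype.ext s.2.2⟩
      left_inv _ := rfl
      right_inv _ := rfl }

end Bases

section Hermitian

variable (F K : Type*) [Field F] [Field K] [Algebra F K]

section Norm

variable {K} {ι : Type*} [Fintype ι]

/-- The `F`-valued diagonal Hermitian norm `∑ N(xᵢ)` on `K ^ ι`, whose zeros are the isotropic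
vectors. It takes values in `F`, rather than in `K`, so that surjectivity of the norm applies. -/
noncomputable def hermitianNorm (x : ι → K) : F := ∑ i, Algebra.norm F (x i)

/-- A subspace of `K ^ ι` all of whose vectors are isotropic, i.e. a linear subspace contained in
the Hermitian variety. -/
def IsTotallyIsotropic (W : Submodule K (ι → K)) : Prop := ∀ x ∈ W, hermitianNorm F x = 0

variable {F}

theorem hermitianNorm_smul (c : K) (v : ι → K) :
    hermitianNorm F (c • v) = Algebra.norm F c * hermitianNorm F v := by
  simp [hermitianNorm, Finset.mul_sum]

theorem isTotallyIsotropic_span_singleton_iff {v : ι → K} :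
    IsTotallyIsotropic F (Submodule.span K {v}) ↔ hermitianNorm F v = 0 := by
  refine ⟨fun h => h v (Submodule.mem_span_singleton_self v), fun hv x hx => ?_⟩
  obtain ⟨c, rfl⟩ := Submodule.mem_span_singleton.1 hx
  rw [hermitianNorm_smul, hv, mul_zero]

theorem card_linearIndependent_isotropic_one :
    Nat.card {s : Fin 1 → ι → K // LinearIndependent K s ∧
        IsTotallyIsotropic F (Submodule.span K (Set.range s))} =
      Nat.card {v : ι → K // hermitianNorm F v = 0 ∧ v ≠ 0} := by
  refine Nat.card_congr ((Equiv.funUnique (Fin 1) (ι → K)).subtypeEquiv fun s => ?_)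
  rw [linearIndependent_unique_iff, Set.range_unique, isTotallyIsotropic_span_singleton_iff]
  exact and_comm

theorem card_isotropic_and_tail [Finite K] {n k : ℕ} (p : (Fin n → K) → Prop)
    (hk : ∀ y, p y → Nat.card {a : K // Algebra.norm F a = -hermitianNorm F y} = k) :
    Nat.card {x : Fin (n + 1) → K // hermitianNorm F x = 0 ∧ p (Fin.tail x)} =
      Nat.card {y // p y} * k := by
  have hcons (a : K) (y : Fin n → K) : hermitianNorm F (Fin.cons a y : Fin (n + 1) → K) = 0 ↔
      Algebra.norm F a = -hermitianNorm F y := by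
    simp [hermitianNorm, Fin.sum_univ_succ, eq_neg_iff_add_eq_zero]
  let tail (x : {x : Fin (n + 1) → K // hermitianNorm F x = 0 ∧ p (Fin.tail x)}) : {y // p y} :=
    ⟨Fin.tail x.1, x.2.2⟩
  refine card_eq_card_mul_of_card_fiber tail fun y => ?_
  rw [← hk y y.2]
  exact Nat.card_congr
    { toFun x := ⟨x.1.1 0, by
        rw [← congrArg Subtype.val x.2, ← hcons, Fin.cons_self_tail, x.1.2.1]⟩
      invFun a := ⟨⟨Fin.cons a.1 y.1, (hcons _ _).2 a.2, y.2⟩, rfl⟩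
      left_inv := by
        rintro ⟨x, rfl⟩
        exact Subtype.ext (Subtype.ext (Fin.cons_self_tail x.1))
      right_inv _ := rfl }

end Norm

variable [Fintype F]

local notation "q" => Fintype.card F

section QuadraticExtension

variable [Algebra.IsQuadraticExtension F K]

theorem natCard_eq_card_sq : Nat.card K = q ^ 2 := by
  rw [Module.natCard_eq_pow_finrank (K := F), Algebra.IsQuadraticExtension.finrank_eq_two,
    Nat.card_eq_fintype_card]

variable {K}

theorem pow_card_pow_card (a : K) : (a ^ q) ^ q = a := by
  have : Finite K := Module.finite_of_finite F
  have := Fintype.ofFinite K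
  rw [← pow_mul, ← sq, ← natCard_eq_card_sq F K, Nat.card_eq_fintype_card, FiniteField.pow_card]

theorem algebraMap_norm_eq_pow_mul (x : K) :
    algebraMap F K (Algebra.norm F x) = x ^ q * x := by
  have : Finite K := Module.finite_of_finite F
  rw [FiniteField.algebraMap_norm_eq_prod_pow, Algebra.IsQuadraticExtension.finrank_eq_two]
  simp [Finset.prod_range_succ, mul_comm]

theorem algebraMap_trace_eq_add_pow (x : K) :
    algebraMap F K (Algebra.trace F K x) = x + x ^ q := by
  have : Finite K := Module.finite_of_finite F
  rw [FiniteField.algebraMap_trace_eq_sum_pow, Algebra.IsQuadraticExtension.finrank_eq_two]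
  simp [Finset.sum_range_succ]

variable {F}

theorem card_norm_eq {a : F} (ha : a ≠ 0) :
    Nat.card {x : K // Algebra.norm F x = a} = q + 1 := by
  have : Finite K := Module.finite_of_finite F
  have e : {u : Kˣ // Units.map (Algebra.norm F) u = Units.mk0 a ha} ≃
      {x : K // Algebra.norm F x = a} :=
    { toFun u := ⟨u.1, congrArg Units.val u.2⟩
      invFun x := ⟨Units.mk0 x.1 fun h => ha (by rw [← x.2, h, Algebra.norm_zero]),
        Units.ext x.2⟩
      left_inv _ := Subtype.ext (Units.ext rfl)
      right_inv _ := rfl }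
  have h := card_monoidHom_fiber (FiniteField.unitsMap_norm_surjective F K) (Units.mk0 a ha)
  rw [Nat.card_congr e, Nat.card_units, Nat.card_units, natCard_eq_card_sq F K,
    Nat.card_eq_fintype_card (α := F), ← one_pow 2, Nat.sq_sub_sq, one_pow] at h
  exact Nat.eq_of_mul_eq_mul_right (Nat.sub_pos_of_lt Fintype.one_lt_card) h

theorem card_trace_mul_eq {b : K} (hb : b ≠ 0) (a : F) :
    Nat.card {c : K // Algebra.trace F K (c * b) = a} = q := by
  have hsurj : Function.Surjective
      ((Algebra.trace F K).toAddMonoidHom.comp (AddMonoidHom.mulRight b)) :=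
    (Algebra.trace_surjective F K).comp fun y => ⟨y / b, div_mul_cancel₀ y hb⟩
  have h := card_addMonoidHom_fiber hsurj a
  rw [natCard_eq_card_sq F K, Nat.card_eq_fintype_card (α := F), sq] at h
  exact Nat.eq_of_mul_eq_mul_right Fintype.card_pos h

end QuadraticExtension

section Form

variable {K} {ι : Type*} [Fintype ι]

/-- The sesquilinear form `∑ xᵢ ^ q * yᵢ` on `K ^ ι`, semilinear in `x` along the Frobenius over
`F`, which polarizes `hermitianNorm`. -/
noncomputable def hermitianForm :
    (ι → K) →ₛₗ[(FiniteField.frobeniusAlgHom F K : K →+* K)] (ι → K) →ₗ[K] K :=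
  LinearMap.mk₂'ₛₗ _ _ (fun x y => ∑ i, FiniteField.frobeniusAlgHom F K (x i) * y i)
    (by simp [add_mul, Finset.sum_add_distrib, -FiniteField.frobeniusAlgHom_apply])
    (by simp [Finset.mul_sum, mul_assoc, -FiniteField.frobeniusAlgHom_apply])
    (by simp [mul_add, Finset.sum_add_distrib])
    (by simp [Finset.mul_sum, mul_left_comm])

theorem hermitianForm_apply (x y : ι → K) : hermitianForm F x y = ∑ i, x i ^ q * y i := rfl

variable {F}

theorem hermitianForm_ne_zero {v : ι → K} (hv : v ≠ 0) : hermitianForm F v ≠ 0 := by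
  classical
  obtain ⟨i, hi⟩ := Function.ne_iff.1 hv
  refine DFunLike.ne_iff.2 ⟨Pi.single i 1, ?_⟩
  simpa [hermitianForm_apply, Pi.single_apply] using hi

variable [Algebra.IsQuadraticExtension F K]

theorem hermitianForm_pow_card (x y : ι → K) :
    hermitianForm F x y ^ q = hermitianForm F y x := by
  have hsum := map_sum (FiniteField.frobeniusAlgHom F K) (fun i => x i ^ q * y i) Finset.univ
  simp only [FiniteField.frobeniusAlgHom_apply, mul_pow, pow_card_pow_card] at hsum
  rw [hermitianForm_apply, hermitianForm_apply, hsum]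
  exact Finset.sum_congr rfl fun i _ => mul_comm _ _

theorem hermitianForm_eq_zero_comm {x y : ι → K} :
    hermitianForm F x y = 0 ↔ hermitianForm F y x = 0 := by
  rw [← hermitianForm_pow_card x y, pow_eq_zero_iff Fintype.card_ne_zero]

theorem algebraMap_hermitianNorm (x : ι → K) :
    algebraMap F K (hermitianNorm F x) = hermitianForm F x x := by
  simp [hermitianNorm, hermitianForm_apply, algebraMap_norm_eq_pow_mul]

theorem hermitianNorm_eq_zero_iff {x : ι → K} :
    hermitianNorm F x = 0 ↔ hermitianForm F x x = 0 := by
  rw [← algebraMap_hermitianNorm, FaithfulSMul.algebraMap_eq_zero_iff]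

theorem hermitianNorm_add (x y : ι → K) :
    hermitianNorm F (x + y) =
      hermitianNorm F x + hermitianNorm F y + Algebra.trace F K (hermitianForm F x y) := by
  refine (algebraMap F K).injective ?_
  simp only [map_add, algebraMap_hermitianNorm, algebraMap_trace_eq_add_pow,
    hermitianForm_pow_card, LinearMap.add_apply]
  ring

theorem hermitianNorm_add_smul {v : ι → K} (hv : hermitianNorm F v = 0) (w : ι → K) (c : K) :
    hermitianNorm F (w + c • v) =
      hermitianNorm F w + Algebra.trace F K (c * hermitianForm F w v) := by
  rw [hermitianNorm_add, hermitianNorm_smul, hv, mul_zero, add_zero, map_smul, smul_eq_mul]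

theorem isTotallyIsotropic_span_iff {s : Set (ι → K)} :
    IsTotallyIsotropic F (Submodule.span K s) ↔ ∀ x ∈ s, ∀ y ∈ s, hermitianForm F x y = 0 := by
  constructor
  · intro h x hx y hy
    by_contra hxy
    obtain ⟨c, hc⟩ : ∃ c, Algebra.trace F K (c * hermitianForm F x y) ≠ 0 := by
      obtain ⟨a, ha⟩ := Algebra.trace_surjective F K 1
      exact ⟨a / hermitianForm F x y, by simp [hxy, ha]⟩
    have hmem {z} (hz : z ∈ s) : z ∈ Submodule.span K s := Submodule.subset_span hz
    have hxcy := hermitianNorm_add_smul (h y (hmem hy)) x c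
    rw [h _ (add_mem (hmem hx) (Submodule.smul_mem _ c (hmem hy))), h x (hmem hx), zero_add] at hxcy
    exact hc hxcy.symm
  · intro h
    suffices hspan : ∀ x ∈ Submodule.span K s, ∀ y ∈ Submodule.span K s,
        hermitianForm F x y = 0 from
      fun x hx => hermitianNorm_eq_zero_iff.2 (hspan x hx x hx)
    intro x hx y hy
    induction hx, hy using Submodule.span_induction₂ with
    | mem_mem x y hx hy => exact h x hx y hy
    | zero_left y => simp
    | zero_right x => simp
    | add_left x y z _ _ _ hxz hyz => simp [hxz, hyz]
    | add_right x y z _ _ _ hxy hxz => simp [hxy, hxz]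
    | smul_left c x y _ _ hxy => simp [hxy]
    | smul_right c x y _ _ hxy => simp [hxy]

end Form

section IsotropicVectors

variable [Algebra.IsQuadraticExtension F K]

theorem card_isotropic_succ (n : ℕ) :
    Nat.card {x : Fin (n + 1) → K // hermitianNorm F x = 0} +
        q * Nat.card {y : Fin n → K // hermitianNorm F y = 0} = (q + 1) * q ^ (2 * n) := by
  have : Finite K := Module.finite_of_finite F
  have hzero := card_isotropic_and_tail (F := F) (k := 1)
    (fun y : Fin n → K => hermitianNorm F y = 0) fun y hy => by simp [hy]
  have hne := card_isotropic_and_tail (fun y : Fin n → K => ¬hermitianNorm F y = 0)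
    fun y hy => card_norm_eq (neg_ne_zero.2 hy)
  have hsplit := card_subtype_and_add_card_subtype_and_not
    (fun x : Fin (n + 1) → K => hermitianNorm F x = 0) (fun x => hermitianNorm F (Fin.tail x) = 0)
  have hcompl := card_subtype_add_card_subtype_not (fun y : Fin n → K => hermitianNorm F y = 0)
  rw [Nat.card_fun, natCard_eq_card_sq F K, Nat.card_fin, ← pow_mul] at hcompl
  rw [← hsplit, hzero, hne, ← hcompl]
  ring

theorem card_mul_card_isotropic (n : ℕ) :
    (q * Nat.card {x : Fin n → K // hermitianNorm F x = 0} : ℤ) =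
      q ^ (2 * n) + (-1) ^ n * (q - 1) * q ^ n := by
  induction n with
  | zero => simp [hermitianNorm]
  | succ n ih =>
    have hsucc := card_isotropic_succ F K n
    zify at hsucc
    linear_combination q * hsucc - q * ih

end IsotropicVectors

section OrthogonalIsotropicVectors

variable {F K} [Algebra.IsQuadraticExtension F K] {ι : Type*} [Fintype ι] {v : ι → K}

theorem card_orthogonal_mul (hv : v ≠ 0) :
    Nat.card {w // hermitianForm F v w = 0} * q ^ 2 = Nat.card (ι → K) := by
  rw [← natCard_eq_card_sq F K]
  exact card_addMonoidHom_fiber (f := (hermitianForm F v).toAddMonoidHom)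
    (LinearMap.surjective (hermitianForm_ne_zero hv)) 0

theorem card_isotropic_not_orthogonal_mul (hv : hermitianNorm F v = 0) :
    Nat.card {w // hermitianNorm F w = 0 ∧ ¬hermitianForm F v w = 0} * q =
      Nat.card {w // ¬hermitianForm F v w = 0} := by
  have : Finite K := Module.finite_of_finite F
  let r (w : {w // ¬hermitianForm F v w = 0}) (c : K) : Prop :=
    hermitianNorm F (w.1 + c • v) = 0
  have hline (w) : Nat.card {c // r w c} = q := by
    have hw : hermitianForm F w.1 v ≠ 0 := hermitianForm_eq_zero_comm.not.1 w.2
    simpa only [r, hermitianNorm_add_smul hv, eq_neg_iff_add_eq_zero, add_comm]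
      using card_trace_mul_eq hw (-hermitianNorm F w.1)
  have htranslate (c) : Nat.card {w // r w c} =
      Nat.card {w // hermitianNorm F w = 0 ∧ ¬hermitianForm F v w = 0} := by
    have hvv := hermitianNorm_eq_zero_iff.1 hv
    refine Nat.card_congr ((Equiv.subtypeSubtypeEquivSubtypeInter _
      fun w => hermitianNorm F (w + c • v) = 0).trans
        ((Equiv.addRight (c • v)).subtypeEquiv fun w => ?_))
    simp [hvv, and_comm]
  have hcount := card_mul_eq_card_mul_of_rel r hline htranslate
  rw [natCard_eq_card_sq F K, sq, mul_assoc] at hcount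
  refine Nat.eq_of_mul_eq_mul_left (Fintype.card_pos (α := F)) ?_
  rw [mul_comm _ q, ← hcount, mul_comm]

theorem card_isotropic_orthogonal_mul (hv : hermitianNorm F v = 0) (hv0 : v ≠ 0) :
    Nat.card {w // hermitianNorm F w = 0 ∧ hermitianForm F v w = 0} * q ^ 3 +
        Nat.card (ι → K) * q ^ 2 =
      Nat.card {w : ι → K // hermitianNorm F w = 0} * q ^ 3 + Nat.card (ι → K) := by
  have : Finite K := Module.finite_of_finite F
  have horth := card_orthogonal_mul (F := F) hv0
  have hnot := card_isotropic_not_orthogonal_mul hv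
  have hcompl := card_subtype_add_card_subtype_not (hermitianForm F v · = 0)
  have hsplit := card_subtype_and_add_card_subtype_and_not
    (hermitianNorm F · = 0) (hermitianForm F v · = 0)
  zify at *
  linear_combination q ^ 3 * hsplit - q ^ 2 * hnot - q ^ 2 * hcompl + horth

theorem card_isotropic_orthogonal_not_mem_span_add (hv : hermitianNorm F v = 0) (hv0 : v ≠ 0) :
    Nat.card {w // (hermitianNorm F w = 0 ∧ hermitianForm F v w = 0) ∧
        w ∉ Submodule.span K {v}} + q ^ 2 =
      Nat.card {w // hermitianNorm F w = 0 ∧ hermitianForm F v w = 0} := by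
  have : Finite K := Module.finite_of_finite F
  have hspan : Nat.card {w // (hermitianNorm F w = 0 ∧ hermitianForm F v w = 0) ∧
      w ∈ Submodule.span K {v}} = q ^ 2 := by
    rw [← natCard_eq_card_sq F K, ← pow_one (Nat.card K), ← finrank_span_singleton (K := K) hv0,
      ← Module.natCard_eq_pow_finrank]
    refine Nat.card_congr (Equiv.subtypeEquivRight fun w => and_iff_right_of_imp fun hw => ?_)
    obtain ⟨c, rfl⟩ := Submodule.mem_span_singleton.1 hw
    exact ⟨by rw [hermitianNorm_smul, hv, mul_zero], by simp [hermitianNorm_eq_zero_iff.1 hv]⟩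
  rw [← card_subtype_and_add_card_subtype_and_not
    (fun w => hermitianNorm F w = 0 ∧ hermitianForm F v w = 0) (· ∈ Submodule.span K {v}),
    hspan, add_comm]

end OrthogonalIsotropicVectors

section IsotropicBases

variable {F K} [Algebra.IsQuadraticExtension F K] {ι : Type*} [Fintype ι]

theorem linearIndependent_and_isotropic_fin_two {s : Fin 2 → ι → K} :
    LinearIndependent K s ∧ IsTotallyIsotropic F (Submodule.span K (Set.range s)) ↔
      (hermitianNorm F (s 1) = 0 ∧ s 1 ≠ 0) ∧
        (hermitianNorm F (s 0) = 0 ∧ hermitianForm F (s 1) (s 0) = 0) ∧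
          s 0 ∉ Submodule.span K {s 1} := by
  rw [isTotallyIsotropic_span_iff, linearIndependent_fin2]
  simp only [Submodule.mem_span_singleton, not_exists, Set.forall_mem_range, Fin.forall_fin_two,
    hermitianNorm_eq_zero_iff, hermitianForm_eq_zero_comm (x := s 0) (y := s 1)]
  tauto

theorem card_linearIndependent_isotropic_two {k : ℕ}
    (hk : ∀ v : ι → K, hermitianNorm F v = 0 → v ≠ 0 →
      Nat.card {w // (hermitianNorm F w = 0 ∧ hermitianForm F v w = 0) ∧
        w ∉ Submodule.span K {v}} = k) :
    Nat.card {s : Fin 2 → ι → K // LinearIndependent K s ∧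
        IsTotallyIsotropic F (Submodule.span K (Set.range s))} =
      Nat.card {v : ι → K // hermitianNorm F v = 0 ∧ v ≠ 0} * k := by
  have : Finite K := Module.finite_of_finite F
  simp only [linearIndependent_and_isotropic_fin_two]
  let second (s : {s : Fin 2 → ι → K // (hermitianNorm F (s 1) = 0 ∧ s 1 ≠ 0) ∧
      (hermitianNorm F (s 0) = 0 ∧ hermitianForm F (s 1) (s 0) = 0) ∧
        s 0 ∉ Submodule.span K {s 1}}) : {v : ι → K // hermitianNorm F v = 0 ∧ v ≠ 0} :=
    ⟨s.1 1, s.2.1⟩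
  refine card_eq_card_mul_of_card_fiber second fun v => ?_
  rw [← hk v v.2.1 v.2.2]
  exact Nat.card_congr
    { toFun s := ⟨s.1.1 0, congrArg Subtype.val s.2 ▸ s.1.2.2⟩
      invFun w := ⟨⟨![w, v], v.2, w.2⟩, rfl⟩
      left_inv := by
        rintro ⟨s, rfl⟩
        exact Subtype.ext (Subtype.ext (List.ofFn_injective rfl))
      right_inv _ := rfl }

end IsotropicBases

section Surface

variable [Algebra.IsQuadraticExtension F K]

theorem card_isotropic_fin_four :
    (Nat.card {v : Fin 4 → K // hermitianNorm F v = 0} : ℤ) = q ^ 7 + q ^ 4 - q ^ 3 := by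
  have hq : (q : ℤ) ≠ 0 := Nat.cast_ne_zero.2 Fintype.card_ne_zero
  refine mul_left_cancel₀ hq ?_
  rw [card_mul_card_isotropic]
  ring

theorem card_isotropic_ne_zero_fin_four :
    Nat.card {v : Fin 4 → K // hermitianNorm F v = 0 ∧ v ≠ 0} =
      (q ^ 2 - 1) * ((q ^ 2 + 1) * (q ^ 3 + 1)) := by
  have : Finite K := Module.finite_of_finite F
  have hq : 1 ≤ q ^ 2 := Nat.one_le_pow _ _ Fintype.card_pos
  have hzero : Nat.card {v : Fin 4 → K // hermitianNorm F v = 0 ∧ v = 0} = 1 := by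
    rw [Nat.card_congr (Equiv.subtypeEquivRight fun v =>
      and_iff_right_of_imp fun hv => by simp [hv, hermitianNorm])]
    simp
  have hsplit := card_subtype_and_add_card_subtype_and_not
    (fun v : Fin 4 → K => hermitianNorm F v = 0) (· = 0)
  rw [hzero] at hsplit
  zify [hq] at hsplit ⊢
  rw [card_isotropic_fin_four] at hsplit
  linear_combination hsplit

variable {F K} in
theorem card_isotropic_orthogonal_not_mem_span_fin_four {v : Fin 4 → K}
    (hv : hermitianNorm F v = 0) (hv0 : v ≠ 0) :
    Nat.card {w // (hermitianNorm F w = 0 ∧ hermitianForm F v w = 0) ∧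
        w ∉ Submodule.span K {v}} = (q ^ 2 - 1) * (q ^ 2 * (q + 1)) := by
  have hq : 1 ≤ q ^ 2 := Nat.one_le_pow _ _ Fintype.card_pos
  have hq0 : (q ^ 3 : ℤ) ≠ 0 := pow_ne_zero _ (Nat.cast_ne_zero.2 Fintype.card_ne_zero)
  have horth := card_isotropic_orthogonal_mul hv hv0
  have hspan := card_isotropic_orthogonal_not_mem_span_add hv hv0
  rw [Nat.card_fun, natCard_eq_card_sq F K, Nat.card_fin, ← pow_mul] at horth
  zify [hq] at *
  rw [card_isotropic_fin_four] at horth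
  refine mul_left_cancel₀ hq0 ?_
  linear_combination q ^ 3 * hspan + horth

theorem card_totallyIsotropic_points_fin_four :
    Nat.card {L : Submodule K (Fin 4 → K) // finrank K L = 1 ∧ IsTotallyIsotropic F L} =
      (q ^ 2 + 1) * (q ^ 3 + 1) := by
  have : Finite K := Module.finite_of_finite F
  have hq : 0 < q ^ 2 - 1 := Nat.sub_pos_of_lt (Nat.one_lt_pow two_ne_zero Fintype.one_lt_card)
  have hbases := card_linearIndependent_and_span (K := K) (V := Fin 4 → K) 1 (IsTotallyIsotropic F)
  rw [card_linearIndependent_isotropic_one, card_isotropic_ne_zero_fin_four,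
    natCard_eq_card_sq F K, Fin.prod_univ_one, pow_one, Fin.val_zero, pow_zero, mul_comm] at hbases
  exact (Nat.eq_of_mul_eq_mul_right hq hbases).symm

theorem card_totallyIsotropic_lines_fin_four :
    Nat.card {W : Submodule K (Fin 4 → K) // finrank K W = 2 ∧ IsTotallyIsotropic F W} =
      (q + 1) * (q ^ 3 + 1) := by
  have : Finite K := Module.finite_of_finite F
  have hq : 0 < q ^ 2 - 1 := Nat.sub_pos_of_lt (Nat.one_lt_pow two_ne_zero Fintype.one_lt_card)
  have hpairs : ((q ^ 2) ^ 2 - 1) * ((q ^ 2) ^ 2 - q ^ 2) =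
      ((q ^ 2 + 1) * (q ^ 2 - 1)) * (q ^ 2 * (q ^ 2 - 1)) := by
    rw [← Nat.sq_sub_sq, one_pow, sq (q ^ 2), Nat.mul_sub_one]
  have hbases := card_linearIndependent_and_span (K := K) (V := Fin 4 → K) 2 (IsTotallyIsotropic F)
  rw [card_linearIndependent_isotropic_two
      fun _ => card_isotropic_orthogonal_not_mem_span_fin_four,
    card_isotropic_ne_zero_fin_four, natCard_eq_card_sq F K, Fin.prod_univ_two, Fin.val_zero,
    Fin.val_one, pow_zero, pow_one, hpairs] at hbases
  have hpos : 0 < ((q ^ 2 + 1) * (q ^ 2 - 1)) * (q ^ 2 * (q ^ 2 - 1)) := by positivity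
  refine Nat.eq_of_mul_eq_mul_right hpos (hbases.symm.trans ?_)
  ring

end Surface

end Hermitian

theorem stmt13_general (F : Type*) {K : Type*} [Field F] [Fintype F] [Field K] [Algebra F K]
    [Algebra.IsQuadraticExtension F K] :
    {L : Submodule K (Fin 4 → K) | finrank K L = 1 ∧
        ∀ x ∈ L, ∑ i, x i ^ (Fintype.card F + 1) = 0}.ncard =
      (Fintype.card F ^ 2 + 1) * (Fintype.card F ^ 3 + 1) ∧
    {W : Submodule K (Fin 4 → K) | finrank K W = 2 ∧
        ∀ x ∈ W, ∑ i, x i ^ (Fintype.card F + 1) = 0}.ncard =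
      (Fintype.card F + 1) * (Fintype.card F ^ 3 + 1) := by
  have hsum (x : Fin 4 → K) :
      ∑ i, x i ^ (Fintype.card F + 1) = 0 ↔ hermitianNorm F x = 0 := by
    simp only [hermitianNorm_eq_zero_iff, hermitianForm_apply, pow_succ]
  simp only [hsum]
  exact ⟨card_totallyIsotropic_points_fin_four F K, card_totallyIsotropic_lines_fin_four F K⟩

/-- Over the field `F₄` with four elements, the Fermat cubic
surface `x₀³ + x₁³ + x₂³ + x₃³ = 0` contains exactly `45` points of `ℙ³(F₄)`
(1-dimensional subspaces of `F₄⁴`, its Eckardt points) and exactly `27` lines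
of `ℙ³(F₄)` (2-dimensional subspaces, its exceptional lines). -/
theorem stmt13 :
    {L : Submodule (GaloisField 2 2) (Fin 4 → GaloisField 2 2) |
        Module.finrank (GaloisField 2 2) L = 1 ∧
        ∀ x ∈ L, (x 0) ^ 3 + (x 1) ^ 3 + (x 2) ^ 3 + (x 3) ^ 3 = 0}.ncard = 45 ∧
    {W : Submodule (GaloisField 2 2) (Fin 4 → GaloisField 2 2) |
        Module.finrank (GaloisField 2 2) W = 2 ∧
        ∀ x ∈ W, (x 0) ^ 3 + (x 1) ^ 3 + (x 2) ^ 3 + (x 3) ^ 3 = 0}.ncard = 27 := by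
  have : Algebra.IsQuadraticExtension (ZMod 2) (GaloisField 2 2) :=
    ⟨GaloisField.finrank 2 two_ne_zero⟩
  simpa [Fin.sum_univ_four] using stmt13_general (ZMod 2) (K := GaloisField 2 2)
end

section
/- Let k be an algebraically closed field of arbitrary characteristic. Identify the 20-dimensional k-vector space of homogeneous degree-3 polynomials in k[x₀,x₁,x₂,x₃] with k²⁰ via the coefficients of the 20 cubic monomials. Then there exists a nonzero polynomial function P on this coefficient space such that every homogeneous cubic F whose coefficient vector does not lie in the zero set of P admits A ∈ GL₄(k), λ ∈ kˣ and scalars a₀₁₂, a₀₁₃, a₀₂₃, a₁₂₃ ∈ k with λ·F(A·x) = x₀³ + x₁³ + x₂³ + x₃³ + a₁₂₃x₁x₂x₃ + a₀₂₃x₀x₂x₃ + a₀₁₃x₀x₁x₃ + a₀₁₂x₀x₁x₂. (A general cubic surface over any algebraically closed field can be written in Emch's normal form.) -/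
open MvPolynomial Matrix

/-!
Write `V` for the linear system spanned by the eight monomials of the normal form. At `(1, E)`, the
map `(A, G) ↦ G(A x)` from `GL₄ × V` to cubic forms has a differential with image
`V + ∑ k xᵢ ∂ⱼE`. This image is the space of all cubics for the Fermat cubic `E = ∑ xᵢ³` if `3 ≠ 0`
in `k`, and for the elementary symmetric polynomial `E = e₃` if `2 ≠ 0` in `k`.

Hence the coefficients of the generic `G(A x)` are algebraically independent, in every
characteristic: were `Q` a relation between them, expand `Q` around the coefficient vector of `E`
and restrict it to a one-parameter family with prescribed first-order part; the lowest homogeneous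
part of the expansion would vanish identically. By Chevalley's theorem the family then reaches every
cubic off a hypersurface, even with nonzero coefficients at all the cubes `xᵢ³`. Rescaling the
variables by cube roots makes these coefficients equal to `1`.
-/

section Dominance

theorem exists_basicOpen_subset_of_bot_mem {R : Type*} [CommRing R] [IsDomain R]
    {s : Set (PrimeSpectrum R)} (hs : Topology.IsConstructible s) (hbot : ⊥ ∈ s) :
    ∃ r : R, r ≠ 0 ∧ (PrimeSpectrum.basicOpen r : Set (PrimeSpectrum R)) ⊆ s := by
  obtain ⟨S, rfl⟩ := PrimeSpectrum.exists_constructibleSetData_iff.mpr hs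
  simp only [PrimeSpectrum.ConstructibleSetData.toSet, Set.mem_iUnion] at hbot
  obtain ⟨D, hDS, hDg, hDf⟩ := hbot
  have hg : Set.range D.g ⊆ {0} := by simpa using hDg
  refine ⟨D.f, fun h => hDf (by simp [h]), fun p hp => Set.mem_biUnion hDS ⟨?_, ?_⟩⟩
  · exact hg.trans (Set.singleton_subset_iff.mpr (zero_mem p.asIdeal))
  · exact fun h => hp (h rfl)

theorem exists_basicOpen_subset_comap_image {R S : Type*} [CommRing R] [IsDomain R] [CommRing S]
    [IsDomain S] {φ : R →+* S} (hφ : Function.Injective φ) (hfp : φ.FinitePresentation)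
    {s : S} (hs : s ≠ 0) :
    ∃ r : R, r ≠ 0 ∧ (PrimeSpectrum.basicOpen r : Set (PrimeSpectrum R)) ⊆
      PrimeSpectrum.comap φ '' PrimeSpectrum.basicOpen s := by
  refine exists_basicOpen_subset_of_bot_mem (PrimeSpectrum.isConstructible_comap_image hfp
    PrimeSpectrum.isConstructible_basicOpen) ⟨⊥, ?_, ?_⟩
  · simpa [PrimeSpectrum.mem_basicOpen] using hs
  · ext1
    exact (RingHom.injective_iff_ker_eq_bot φ).mp hφ

theorem finitePresentation_of_algHom {k A B : Type*} [CommRing k] [CommRing A] [Algebra k A]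
    [CommRing B] [Algebra k B] [Algebra.FiniteType k A] [Algebra.FinitePresentation k B]
    (φ : A →ₐ[k] B) : φ.FinitePresentation := by
  have hcomp : φ.comp (Algebra.ofId k A) = Algebra.ofId k B := Subsingleton.elim _ _
  refine AlgHom.FinitePresentation.of_comp_finiteType (Algebra.ofId k A) ?_
    (RingHom.finiteType_algebraMap.mpr inferInstance)
  rw [hcomp]
  exact RingHom.finitePresentation_algebraMap.mpr inferInstance

theorem exists_forall_exists_eval_eq_of_algebraicIndependent {k σ τ : Type*} [Field k]
    [IsAlgClosed k] [Finite σ] [Finite τ] {f : τ → MvPolynomial σ k}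
    (hf : AlgebraicIndependent k f) {h : MvPolynomial σ k} (hh : h ≠ 0) :
    ∃ P : MvPolynomial τ k, P ≠ 0 ∧ ∀ y : τ → k, eval y P ≠ 0 →
      ∃ x : σ → k, eval x h ≠ 0 ∧ ∀ m, eval x (f m) = y m := by
  obtain ⟨P, hP, hsub⟩ :=
    exists_basicOpen_subset_comap_image hf (finitePresentation_of_algHom (aeval f)) hh
  refine ⟨P, hP, fun y hy => ?_⟩
  let p : PrimeSpectrum (MvPolynomial τ k) := ⟨RingHom.ker (eval y), RingHom.ker_isPrime _⟩
  obtain ⟨q, hhq, hqp⟩ : p ∈ PrimeSpectrum.comap _ '' _ := hsub hy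
  have hq := q.isPrime
  obtain ⟨x, hxq, hxh⟩ : ∃ x ∈ zeroLocus k q.asIdeal, eval x h ≠ 0 := by
    by_contra! hzero
    exact hhq (by simpa only [IsPrime.vanishingIdeal_zeroLocus] using!
      (mem_vanishingIdeal_iff (k := k) (V := zeroLocus k q.asIdeal)).mpr hzero)
  refine ⟨x, hxh, fun m => ?_⟩
  have hmem : X m - C (y m) ∈ (PrimeSpectrum.comap (aeval f).toRingHom q).asIdeal := by
    rw [hqp]
    simp [p, RingHom.mem_ker]
  have hvanish : aeval x (aeval f (X m - C (y m))) = 0 := hxq _ hmem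
  simpa [sub_eq_zero] using hvanish

end Dominance

section ArcCriterion

theorem aeval_mul_of_isHomogeneous {R S σ : Type*} [CommSemiring R] [CommSemiring S]
    [Algebra R S] {p : MvPolynomial σ R} {n : ℕ} (hp : p.IsHomogeneous n) (t : S)
    (s : σ → S) : aeval (fun i => t * s i) p = t ^ n * aeval s p := by
  rw [aeval_def, aeval_def, eval₂_eq, eval₂_eq, Finset.mul_sum]
  refine Finset.sum_congr rfl fun d hd => ?_
  have hdeg : ∑ i ∈ d.support, d i = n := by
    by_contra h
    exact mem_support_iff.mp hd (hp.coeff_eq_zero h)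
  simp only [mul_pow, Finset.prod_mul_distrib, Finset.prod_pow_eq_pow_sum, hdeg]
  ring

theorem coeff_aeval_X_mul_of_homogeneousComponent_eq_zero {R σ : Type*} [CommSemiring R]
    {p : MvPolynomial σ R} {d : ℕ} (hp : ∀ e < d, homogeneousComponent e p = 0)
    (s : σ → Polynomial R) :
    (aeval (fun i => Polynomial.X * s i) p).coeff d =
      eval (fun i => (s i).coeff 0) (homogeneousComponent d p) := by
  have hterm (e : ℕ) : aeval (fun i => Polynomial.X * s i) (homogeneousComponent e p) =
      Polynomial.X ^ e * aeval s (homogeneousComponent e p) :=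
    aeval_mul_of_isHomogeneous (homogeneousComponent_isHomogeneous e p) _ _
  have hconst : (aeval s (homogeneousComponent d p)).coeff 0 =
      eval (fun i => (s i).coeff 0) (homogeneousComponent d p) := by
    rw [Polynomial.coeff_zero_eq_aeval_zero, ← AlgHom.restrictScalars_apply R, comp_aeval_apply,
      aeval_eq_eval]
    simp [Polynomial.coeff_zero_eq_aeval_zero]
  conv_lhs => rw [← sum_homogeneousComponent p]
  rw [map_sum, Polynomial.finsetSum_coeff, Finset.sum_eq_single d, hterm,
    Polynomial.coeff_X_pow_mul', if_pos le_rfl, Nat.sub_self, hconst]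
  · intro e _ hed
    rcases lt_or_gt_of_ne hed with h | h
    · simp [hp e h]
    · rw [hterm, Polynomial.coeff_X_pow_mul', if_neg h.not_ge]
  · intro hd
    rw [homogeneousComponent_eq_zero d p (by simpa using hd)]
    simp

theorem algebraicIndependent_of_forall_exists_arc {R σ τ : Type*} [CommRing R] [IsDomain R]
    [Infinite R] {f : τ → MvPolynomial σ R} (b : τ → R)
    (hf : ∀ w : τ → R, ∃ x : σ → Polynomial R, ∀ m, Polynomial.X ^ 2 ∣
      aeval x (f m) - (Polynomial.C (b m) + Polynomial.X * Polynomial.C (w m))) :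
    AlgebraicIndependent R f := by
  refine (injective_iff_map_eq_zero _).mpr fun Q hQ => ?_
  let Q' : MvPolynomial τ R := aeval (fun m => X m + C (b m)) Q
  have hcomponent (d : ℕ) : homogeneousComponent d Q' = 0 := by
    induction d using Nat.strong_induction_on with
    | _ d ih =>
      refine MvPolynomial.funext fun w => ?_
      obtain ⟨x, hx⟩ := hf w
      choose r hr using hx
      let s m := Polynomial.C (w m) + Polynomial.X * r m
      have hs (m : τ) : Polynomial.X * s m + Polynomial.C (b m) = aeval x (f m) := by
        linear_combination -hr m
      have harc : aeval (fun m => Polynomial.X * s m) Q' = 0 := calc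
        _ = aeval (fun m => aeval x (f m)) Q := by
          simp only [Q', comp_aeval_apply, map_add, aeval_X, algHom_C, Polynomial.algebraMap_eq, hs]
        _ = aeval x (aeval f Q) := (comp_aeval_apply _ _ _).symm
        _ = 0 := by rw [hQ, map_zero]
      simpa [s, harc] using (coeff_aeval_X_mul_of_homogeneousComponent_eq_zero ih s).symm
  have hQ' : Q' = 0 := by
    rw [← sum_homogeneousComponent Q']
    exact Finset.sum_eq_zero fun d _ => hcomponent d
  refine MvPolynomial.funext fun y => ?_
  have heval : aeval (fun m => y m - b m) Q' = aeval y Q := by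
    rw [comp_aeval_apply]
    simp
  rw [← aeval_eq_eval, ← heval, hQ', map_zero, map_zero]

theorem sq_dvd_aeval_add_mul_sub {R S σ : Type*} [CommRing R] [CommRing S] [Algebra R S]
    [Fintype σ] (x v : σ → S) (t : S) (p : MvPolynomial σ R) :
    t ^ 2 ∣ aeval (fun i => x i + t * v i) p -
      (aeval x p + t * ∑ i, v i * aeval x (pderiv i p)) := by
  classical
  induction p using MvPolynomial.induction_on with
  | C a => simp
  | add p q hp hq =>
    convert! dvd_add hp hq using 1
    simp only [map_add, mul_add, Finset.sum_add_distrib]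
    ring
  | mul_X p j hp =>
    obtain ⟨r, hr⟩ := hp
    have hleibniz : ∑ i, v i * aeval x (pderiv i (p * X j)) =
        (∑ i, v i * aeval x (pderiv i p)) * x j + aeval x p * v j := by
      simp only [Derivation.leibniz, pderiv_X, smul_eq_mul, map_add, map_mul, aeval_X, mul_add,
        Pi.single_apply, apply_ite (aeval x), map_zero, mul_ite, mul_one, mul_zero,
        Finset.sum_add_distrib, Finset.sum_ite_eq, Finset.mem_univ, if_true, Finset.sum_mul]
      rw [add_comm, mul_comm (v j)]
      congr 1
      exact Finset.sum_congr rfl fun i _ => by ring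
    refine ⟨r * (x j + t * v j) + v j * ∑ i, v i * aeval x (pderiv i p), ?_⟩
    rw [hleibniz, map_mul, map_mul, aeval_X, aeval_X]
    linear_combination (x j + t * v j) * hr

end ArcCriterion

section HomogeneousForms

variable {R σ : Type*} [CommSemiring R]

theorem homogeneousSubmodule_le_of_forall_prod_X_mem {n : ℕ}
    {V : Submodule R (MvPolynomial σ R)} (hV : ∀ s : Fin n → σ, ∏ i, X (s i) ∈ V) :
    homogeneousSubmodule σ R n ≤ V := by
  rw [← homogeneousSubmodule_one_pow, homogeneousSubmodule_one_eq_span_X, Submodule.span_pow,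
    Submodule.span_le]
  intro p hp
  obtain ⟨s, rfl⟩ := Set.mem_pow.mp hp
  choose v hv using fun i => (s i).2
  simpa only [SetLike.mem_coe, List.prod_ofFn, ← hv] using hV v

variable [Fintype σ] {d : ℕ}

theorem finite_subtype_sum_eq (σ : Type*) [Fintype σ] (d : ℕ) :
    Finite {m : σ →₀ ℕ // ∑ i, m i = d} := by
  simpa only [Finsupp.degree_eq_sum] using! (Finsupp.finite_of_degree_eq (σ := σ) d).to_subtype

theorem exists_isHomogeneous_coeff_eq (w : {m : σ →₀ ℕ // ∑ i, m i = d} → R) :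
    ∃ W : MvPolynomial σ R, W.IsHomogeneous d ∧ ∀ m, W.coeff m.1 = w m := by
  classical
  have := finite_subtype_sum_eq σ d
  have := Fintype.ofFinite {m : σ →₀ ℕ // ∑ i, m i = d}
  refine ⟨∑ m, monomial m.1 (w m), IsHomogeneous.sum _ _ _ fun m _ =>
    isHomogeneous_monomial _ ((Finsupp.degree_eq_sum _).trans m.2), fun m => ?_⟩
  simp [coeff_sum, coeff_monomial, Subtype.coe_inj]

theorem eq_of_isHomogeneous_of_forall_coeff_eq {F F' : MvPolynomial σ R}
    (hF : F.IsHomogeneous d) (hF' : F'.IsHomogeneous d)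
    (h : ∀ m : {m : σ →₀ ℕ // ∑ i, m i = d}, F.coeff m.1 = F'.coeff m.1) : F = F' := by
  ext m
  by_cases hm : m.degree = d
  · exact h ⟨m, (Finsupp.degree_eq_sum m).symm.trans hm⟩
  · rw [hF.coeff_eq_zero hm, hF'.coeff_eq_zero hm]

end HomogeneousForms

section LinearSubstitution

variable {R n : Type*} [CommSemiring R] [Fintype n]

theorem toMvPolynomial_smul {m : Type*} (t : R) (N : Matrix m n R) (i : m) :
    (t • N).toMvPolynomial i = C t * N.toMvPolynomial i := by
  simp [Matrix.toMvPolynomial, C_mul_monomial, Finset.mul_sum]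

theorem toMvPolynomial_diagonal [DecidableEq n] (d : n → R) (i : n) :
    (diagonal d).toMvPolynomial i = C (d i) * X i := by
  rw [Matrix.toMvPolynomial, Finset.sum_eq_single i]
  · rw [diagonal_apply_eq, C_mul_X_eq_monomial]
  · intro j _ hji
    rw [diagonal_apply_ne d hji.symm, monomial_zero]
  · simp

theorem substMatrix_eq_bind₁ {k : Type*} [Field k] (A : Matrix (Fin 4) (Fin 4) k)
    (F : MvPolynomial (Fin 4) k) : substMatrix A F = bind₁ A.toMvPolynomial F := by
  rw [substMatrix, aeval_eq_bind₁]
  congr 2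
  ext1 i
  simp only [Matrix.toMvPolynomial, C_mul_X_eq_monomial]

end LinearSubstitution

section TangentSpace

variable {R σ ι : Type*} [CommSemiring R]

/-- The tangent space, at a member `E` of the linear system spanned by `G`, to the set of all forms
`G'(A x)` with `G'` in the system and `A` an invertible matrix. -/
noncomputable def orbitTangentSpace (G : ι → MvPolynomial σ R) (E : MvPolynomial σ R) :
    Submodule R (MvPolynomial σ R) :=
  .span R (Set.range G) ⊔ .span R (Set.range fun p : σ × σ => X p.1 * pderiv p.2 E)

theorem mem_orbitTangentSpace (G : ι → MvPolynomial σ R) (E : MvPolynomial σ R) (l : ι) :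
    G l ∈ orbitTangentSpace G E :=
  Submodule.mem_sup_left (Submodule.subset_span ⟨l, rfl⟩)

theorem X_mul_pderiv_mem_orbitTangentSpace (G : ι → MvPolynomial σ R) (E : MvPolynomial σ R)
    (i j : σ) : X i * pderiv j E ∈ orbitTangentSpace G E :=
  Submodule.mem_sup_right (Submodule.subset_span ⟨(i, j), rfl⟩)

end TangentSpace

section OrbitForm

variable {R S T σ ι : Type*} [CommSemiring R] [CommSemiring S] [Algebra R S] [CommSemiring T]
  [Algebra R T] [Fintype σ] [Fintype ι]

/-- The form `∑ c_l G_l(A x)`, i.e. the image of the member `∑ c_l G_l` of the linear system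
spanned by `G` under the substitution `A`. The coefficients `A`, `c` may lie in any algebra over
the base ring of `G`, so that generic matrices and one-parameter families are covered. -/
noncomputable def orbitForm (G : ι → MvPolynomial σ R) (A : Matrix σ σ S) (c : ι → S) :
    MvPolynomial σ S :=
  ∑ l, C (c l) * aeval A.toMvPolynomial (G l)

theorem map_orbitForm (φ : S →ₐ[R] T) (G : ι → MvPolynomial σ R) (A : Matrix σ σ S)
    (c : ι → S) : mapAlgHom φ (orbitForm G A c) = orbitForm G (A.map φ) (φ ∘ c) := by
  have hA : (A.map φ).toMvPolynomial = fun i => mapAlgHom (R := R) φ (A.toMvPolynomial i) :=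
    _root_.funext (toMvPolynomial_map (φ : S →+* T) A)
  have hC (s : S) : mapAlgHom (R := R) φ (C s : MvPolynomial σ S) = C (φ s) := map_C _ s
  simp only [orbitForm, map_sum, map_mul, comp_aeval_apply, hA, hC, Function.comp_apply]

theorem orbitForm_eq_bind₁ (G : ι → MvPolynomial σ R) (A : Matrix σ σ R) (c : ι → R) :
    orbitForm G A c = bind₁ A.toMvPolynomial (∑ l, c l • G l) := by
  simp only [orbitForm, smul_eq_C_mul, aeval_eq_bind₁, map_sum, map_mul, bind₁_C_right]

theorem isHomogeneous_orbitForm {G : ι → MvPolynomial σ R} {d : ℕ}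
    (hG : ∀ l, (G l).IsHomogeneous d) (A : Matrix σ σ S) (c : ι → S) :
    (orbitForm G A c).IsHomogeneous d := by
  refine IsHomogeneous.sum _ _ _ fun l _ => ?_
  simpa using! (isHomogeneous_C σ (c l)).mul
    ((hG l).aeval _ fun i => A.toMvPolynomial_isHomogeneous i)

/-- The generic member of the family `orbitForm`: its coefficients are the coordinates of the
orbit map, in the entries of the matrix (`Sum.inl`) and the coefficients (`Sum.inr`). -/
noncomputable def genericOrbitForm (G : ι → MvPolynomial σ R) :
    MvPolynomial σ (MvPolynomial (σ × σ ⊕ ι) R) :=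
  orbitForm G (.of fun i j => X (.inl (i, j))) (fun l => X (.inr l))

theorem aeval_coeff_genericOrbitForm (G : ι → MvPolynomial σ R) (A : Matrix σ σ S)
    (c : ι → S) (m : σ →₀ ℕ) :
    aeval (Sum.elim (fun p => A p.1 p.2) c) ((genericOrbitForm G).coeff m) =
      (orbitForm G A c).coeff m := by
  have hspecialize : mapAlgHom (aeval (R := R) (Sum.elim (fun p => A p.1 p.2) c))
      (genericOrbitForm G) = orbitForm G A c := by
    rw [genericOrbitForm, map_orbitForm]
    congr 1 <;> ext <;> simp
  rw [← hspecialize, mapAlgHom_apply, coeff_map]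
  rfl

/-- The differential of `(A, c) ↦ orbitForm G A c` at `(1, c)` in the direction `(N, γ)`. -/
noncomputable def orbitDifferential (G : ι → MvPolynomial σ R) (c : ι → S)
    (N : Matrix σ σ S) (γ : ι → S) : MvPolynomial σ S :=
  ∑ l, (C (γ l) * aeval X (G l) +
    C (c l) * ∑ i, N.toMvPolynomial i * aeval X (pderiv i (G l)))

theorem map_orbitDifferential (φ : S →ₐ[R] T) (G : ι → MvPolynomial σ R) (c : ι → S)
    (N : Matrix σ σ S) (γ : ι → S) :
    mapAlgHom φ (orbitDifferential G c N γ) =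
      orbitDifferential G (φ ∘ c) (N.map φ) (φ ∘ γ) := by
  have hX (p : MvPolynomial σ R) :
      mapAlgHom (R := R) φ (aeval (X : σ → MvPolynomial σ S) p) = aeval X p := by
    rw [comp_aeval_apply]
    simp only [mapAlgHom_apply, map_X]
  have hN (i : σ) : mapAlgHom (R := R) φ (N.toMvPolynomial i) = (N.map φ).toMvPolynomial i :=
    (toMvPolynomial_map (φ : S →+* T) N i).symm
  have hC (s : S) : mapAlgHom (R := R) φ (C s : MvPolynomial σ S) = C (φ s) := map_C _ s
  simp only [orbitDifferential, map_sum, map_add, map_mul, hX, hN, hC, Function.comp_apply]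

theorem exists_orbitDifferential_eq {G : ι → MvPolynomial σ R} {c : ι → R}
    {W : MvPolynomial σ R} (hW : W ∈ orbitTangentSpace G (∑ l, c l • G l)) :
    ∃ N γ, orbitDifferential G c N γ = W := by
  obtain ⟨_, hU, _, hV, rfl⟩ := Submodule.mem_sup.mp hW
  obtain ⟨γ, rfl⟩ := (Submodule.mem_span_range_iff_exists_fun R).mp hU
  obtain ⟨n, rfl⟩ := (Submodule.mem_span_range_iff_exists_fun R).mp hV
  refine ⟨.of fun i j => n (j, i), γ, ?_⟩
  have hvectorField (p : MvPolynomial σ R) :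
      ∑ i, (Matrix.of fun i j => n (j, i)).toMvPolynomial i * pderiv i p =
        ∑ q : σ × σ, n q • (X q.1 * pderiv q.2 p) := by
    rw [Fintype.sum_prod_type_right]
    simp only [Matrix.toMvPolynomial, of_apply, Finset.sum_mul, ← C_mul_X_eq_monomial,
      smul_eq_C_mul, mul_assoc]
  simp only [orbitDifferential, aeval_X_left_apply, hvectorField, ← smul_eq_C_mul,
    Finset.sum_add_distrib]
  congr 1
  simp only [map_sum, Derivation.map_smul, Finset.mul_sum, Finset.smul_sum, mul_smul_comm]
  rw [Finset.sum_comm]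
  simp only [smul_comm (c _)]

end OrbitForm

section GenericForm

variable {R S σ ι : Type*} [CommRing R] [CommRing S] [Algebra R S] [Fintype σ] [Fintype ι]

theorem sq_dvd_orbitForm_sub [DecidableEq σ] (G : ι → MvPolynomial σ R) (c : ι → S)
    (N : Matrix σ σ S) (γ : ι → S) (t : S) :
    C t ^ 2 ∣ orbitForm G (1 + t • N) (c + t • γ) -
      (orbitForm G 1 c + C t * orbitDifferential G c N γ) := by
  have hsubst : (1 + t • N).toMvPolynomial = fun i => X i + C t * N.toMvPolynomial i := by
    ext1 i
    rw [toMvPolynomial_add, toMvPolynomial_one, Pi.add_apply, toMvPolynomial_smul]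
  simp only [orbitForm, orbitDifferential, hsubst, toMvPolynomial_one, Finset.mul_sum,
    ← Finset.sum_add_distrib, ← Finset.sum_sub_distrib]
  refine Finset.dvd_sum fun l _ => ?_
  obtain ⟨r, hr⟩ := sq_dvd_aeval_add_mul_sub X N.toMvPolynomial (C t) (G l)
  refine ⟨C (γ l) * (∑ i, N.toMvPolynomial i * aeval X (pderiv i (G l))) +
    C ((c + t • γ) l) * r, ?_⟩
  simp only [Pi.add_apply, Pi.smul_apply, smul_eq_mul, C_add, C_mul, ← Finset.mul_sum]
  linear_combination (C (c l) + C t * C (γ l)) * hr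

theorem algebraicIndependent_coeff_genericOrbitForm [IsDomain R] [Infinite R] {d : ℕ}
    {G : ι → MvPolynomial σ R} {c : ι → R}
    (hG : homogeneousSubmodule σ R d ≤ orbitTangentSpace G (∑ l, c l • G l)) :
    AlgebraicIndependent R fun m : {m : σ →₀ ℕ // ∑ i, m i = d} =>
      (genericOrbitForm G).coeff m.1 := by
  classical
  let E : MvPolynomial σ R := orbitForm G 1 c
  refine algebraicIndependent_of_forall_exists_arc (fun m => E.coeff m.1) fun w => ?_
  obtain ⟨W, hW, hWw⟩ := exists_isHomogeneous_coeff_eq w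
  obtain ⟨N, γ, hNγ⟩ := exists_orbitDifferential_eq (hG hW)
  let φ := Algebra.ofId R (Polynomial R)
  let t : Polynomial R := Polynomial.X
  refine ⟨Sum.elim (fun p => (1 + t • N.map φ) p.1 p.2) (φ ∘ c + t • φ ∘ γ), fun m => ?_⟩
  have hE : mapAlgHom φ E = orbitForm G 1 (φ ∘ c) := by
    rw [map_orbitForm, Matrix.map_one φ (map_zero φ) (map_one φ)]
  have hexpand := sq_dvd_orbitForm_sub G (φ ∘ c) (N.map φ) (φ ∘ γ) t
  rw [← map_orbitDifferential, hNγ, ← hE, ← C_pow, C_dvd_iff_dvd_coeff] at hexpand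
  have hcoeff := hexpand m.1
  rw [coeff_sub, coeff_add, coeff_C_mul, mapAlgHom_apply, mapAlgHom_apply, coeff_map,
    coeff_map] at hcoeff
  rwa [aeval_coeff_genericOrbitForm, ← hWw]

theorem exists_forall_exists_bind₁_toMvPolynomial_eq_sum [DecidableEq σ] {k : Type*} [Field k]
    [IsAlgClosed k] {d : ℕ} {G : ι → MvPolynomial σ k} (hG : ∀ l, (G l).IsHomogeneous d)
    {c₀ : ι → k} (htangent : homogeneousSubmodule σ k d ≤ orbitTangentSpace G (∑ l, c₀ l • G l))
    {h : MvPolynomial ι k} (hh : h ≠ 0) :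
    ∃ P : MvPolynomial {m : σ →₀ ℕ // ∑ i, m i = d} k, P ≠ 0 ∧
      ∀ F : MvPolynomial σ k, F.IsHomogeneous d → eval (fun m => F.coeff m.1) P ≠ 0 →
        ∃ (A : Matrix σ σ k) (c : ι → k), IsUnit A.det ∧ eval c h ≠ 0 ∧
          bind₁ A.toMvPolynomial F = ∑ l, c l • G l := by
  have := finite_subtype_sum_eq σ d
  have hdet : rename (Sum.inl : σ × σ → σ × σ ⊕ ι) (det (mvPolynomialX σ σ k)) ≠ 0 :=
    (rename_eq_zero_iff_of_injective _ Sum.inl_injective).not.mpr (det_mvPolynomialX_ne_zero σ k)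
  have hinr : rename (Sum.inr : ι → σ × σ ⊕ ι) h ≠ 0 :=
    (rename_eq_zero_iff_of_injective _ Sum.inr_injective).not.mpr hh
  obtain ⟨P, hP, hPF⟩ := exists_forall_exists_eval_eq_of_algebraicIndependent
    (algebraicIndependent_coeff_genericOrbitForm htangent) (mul_ne_zero hdet hinr)
  refine ⟨P, hP, fun F hF hFP => ?_⟩
  obtain ⟨x, hx, hxF⟩ := hPF _ hFP
  rw [map_mul, eval_rename, eval_rename] at hx
  let B : Matrix σ σ k := .of fun i j => x (.inl (i, j))
  let c : ι → k := x ∘ .inr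
  have hBdet : IsUnit B.det := by
    have hne := left_ne_zero_of_mul hx
    rwa [eval_det_mvPolynomialX, ← isUnit_iff_ne_zero] at hne
  have hxBc : x = Sum.elim (fun p => B p.1 p.2) c := by ext (p | l) <;> rfl
  have hFB : F = bind₁ B.toMvPolynomial (∑ l, c l • G l) := by
    rw [← orbitForm_eq_bind₁]
    refine eq_of_isHomogeneous_of_forall_coeff_eq hF (isHomogeneous_orbitForm hG B c) fun m => ?_
    rw [← hxF, ← aeval_eq_eval, hxBc, aeval_coeff_genericOrbitForm]
  refine ⟨B⁻¹, c, B.isUnit_nonsing_inv_det hBdet, right_ne_zero_of_mul hx, ?_⟩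
  rw [hFB, bind₁_bind₁]
  simp only [← toMvPolynomial_mul, B.mul_nonsing_inv hBdet, toMvPolynomial_one, bind₁_X_left,
    AlgHom.id_apply]

end GenericForm

section EmchMonomials

variable {R : Type*} [CommSemiring R]

/-- The eight monomials of Emch's normal form: the cubes `xᵢ³` (`Sum.inl i`) and the squarefree
cubic monomials, indexed by the variable `xᵢ` they omit (`Sum.inr i`). -/
noncomputable def emchMonomial (R : Type*) [CommSemiring R] :
    Fin 4 ⊕ Fin 4 → MvPolynomial (Fin 4) R :=
  Sum.elim (fun i => X i ^ 3) (fun i => ∏ j ∈ {i}ᶜ, X j)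

theorem emchMonomial_inl (i : Fin 4) : emchMonomial R (.inl i) = X i ^ 3 := rfl

theorem emchMonomial_inr (i : Fin 4) : emchMonomial R (.inr i) = ∏ j ∈ {i}ᶜ, X j := rfl

theorem isHomogeneous_emchMonomial (l : Fin 4 ⊕ Fin 4) : (emchMonomial R l).IsHomogeneous 3 := by
  rcases l with i | i
  · simpa [emchMonomial] using isHomogeneous_X_pow (R := R) i 3
  · simpa [emchMonomial, Finset.card_compl] using
      IsHomogeneous.prod ({i}ᶜ : Finset (Fin 4)) (fun j => (X j : MvPolynomial (Fin 4) R)) 1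
        fun j _ => isHomogeneous_X R j

theorem sum_mul_emchMonomial_inr (a : Fin 4 → MvPolynomial (Fin 4) R) :
    ∑ i, a i * emchMonomial R (.inr i) =
      a 0 * (X 1 * X 2 * X 3) + a 1 * (X 0 * X 2 * X 3) + a 2 * (X 0 * X 1 * X 3) +
        a 3 * (X 0 * X 1 * X 2) := by
  have h0 : ({0}ᶜ : Finset (Fin 4)) = {1, 2, 3} := rfl
  have h1 : ({1}ᶜ : Finset (Fin 4)) = {0, 2, 3} := rfl
  have h2 : ({2}ᶜ : Finset (Fin 4)) = {0, 1, 3} := rfl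
  have h3 : ({3}ᶜ : Finset (Fin 4)) = {0, 1, 2} := rfl
  simp [Fin.sum_univ_four, emchMonomial_inr, h0, h1, h2, h3, mul_assoc]

theorem exists_X_mul_X_mul_X_eq_emchMonomial {i j l : Fin 4} (hij : i ≠ j) (hil : i ≠ l)
    (hjl : j ≠ l) : ∃ p, X i * X j * X l = emchMonomial R p := by
  have hcard : ({i, j, l} : Finset (Fin 4))ᶜ.card = 1 := by
    rw [Finset.card_compl, Finset.card_eq_three.mpr ⟨i, j, l, hij, hil, hjl, rfl⟩,
      Fintype.card_fin]
  obtain ⟨p, hp⟩ := Finset.card_eq_one.mp hcard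
  refine ⟨.inr p, ?_⟩
  simp [emchMonomial, ← hp, hij, hil, hjl, mul_assoc]

theorem homogeneousSubmodule_three_le_of_forall_mem {V : Submodule R (MvPolynomial (Fin 4) R)}
    (hmonomial : ∀ p, emchMonomial R p ∈ V) (hsq : ∀ i j, X i ^ 2 * X j ∈ V) :
    homogeneousSubmodule (Fin 4) R 3 ≤ V := by
  refine homogeneousSubmodule_le_of_forall_prod_X_mem fun s => ?_
  rw [Fin.prod_univ_three]
  rcases eq_or_ne (s 0) (s 1) with h01 | h01
  · simpa only [h01, sq] using hsq (s 1) (s 2)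
  rcases eq_or_ne (s 0) (s 2) with h02 | h02
  · simpa only [h02, sq, mul_right_comm] using hsq (s 2) (s 1)
  rcases eq_or_ne (s 1) (s 2) with h12 | h12
  · simpa only [h12, sq, mul_rotate] using hsq (s 2) (s 0)
  obtain ⟨p, hp⟩ := exists_X_mul_X_mul_X_eq_emchMonomial (R := R) h01 h02 h12
  exact hp ▸ hmonomial p

-- For `E = e₃`: `∂ⱼE = e₂ - xⱼ(e₁ - xⱼ)`, and `∑ₗ ∂ₗE = 2e₂`.
theorem sum_pderiv_sum_emchMonomial_inr_sub {R : Type*} [CommRing R] (j : Fin 4) :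
    ∑ l, pderiv l (∑ i, emchMonomial R (.inr i)) -
        2 * pderiv j (∑ i, emchMonomial R (.inr i)) =
      2 * X j * (∑ l, X l - X j) := by
  have hE := sum_mul_emchMonomial_inr (R := R) 1
  simp only [Pi.one_apply, one_mul] at hE
  simp only [hE, map_add, Derivation.leibniz, pderiv_X, Pi.single_apply, smul_eq_mul,
    Fin.sum_univ_four]
  fin_cases j <;>
    simp only [Fin.isValue, Fin.zero_eta, Fin.mk_one, Fin.reduceFinMk, Fin.reduceEq, one_ne_zero,
      zero_ne_one, if_true, if_false] <;>
    ring

end EmchMonomials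

section EmchTangentSpace

variable {k : Type*} [Field k]

theorem homogeneousSubmodule_le_orbitTangentSpace_sum_inl (h3 : (3 : k) ≠ 0) :
    homogeneousSubmodule (Fin 4) k 3 ≤
      orbitTangentSpace (emchMonomial k) (∑ i, emchMonomial k (.inl i)) := by
  refine homogeneousSubmodule_three_le_of_forall_mem (mem_orbitTangentSpace _ _) fun i j => ?_
  have hpderiv : pderiv i (∑ l, emchMonomial k (.inl l)) = (3 : k) • X i ^ 2 := by
    simp [emchMonomial_inl, pderiv_X, Pi.single_apply, ofNat_smul_eq_nsmul]
  have hmem := Submodule.smul_mem _ (3⁻¹ : k)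
    (X_mul_pderiv_mem_orbitTangentSpace (emchMonomial k) (∑ l, emchMonomial k (.inl l)) j i)
  rwa [hpderiv, mul_smul_comm, inv_smul_smul₀ h3, mul_comm] at hmem

theorem homogeneousSubmodule_le_orbitTangentSpace_sum_inr (h2 : (2 : k) ≠ 0) :
    homogeneousSubmodule (Fin 4) k 3 ≤
      orbitTangentSpace (emchMonomial k) (∑ i, emchMonomial k (.inr i)) := by
  let E := ∑ i, emchMonomial k (.inr i)
  let V := orbitTangentSpace (emchMonomial k) E
  refine homogeneousSubmodule_three_le_of_forall_mem (mem_orbitTangentSpace _ _) fun i j => ?_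
  rcases eq_or_ne i j with rfl | hij
  · exact mem_orbitTangentSpace (emchMonomial k) E (.inl i)
  have hsquarefree : ∑ l ∈ {i, j}ᶜ, X i * X j * X l ∈ V := by
    refine sum_mem fun l hl => ?_
    simp only [Finset.mem_compl, Finset.mem_insert, Finset.mem_singleton, not_or] at hl
    obtain ⟨p, hp⟩ :=
      exists_X_mul_X_mul_X_eq_emchMonomial (R := k) hij (Ne.symm hl.1) (Ne.symm hl.2)
    exact hp ▸ mem_orbitTangentSpace _ _ _
  have hpderiv : ∑ l, X i * pderiv l E - (2 : k) • (X i * pderiv j E) ∈ V :=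
    sub_mem (sum_mem fun l _ => X_mul_pderiv_mem_orbitTangentSpace _ _ _ _)
      (V.smul_mem _ (X_mul_pderiv_mem_orbitTangentSpace _ _ _ _))
  have hsum : (∑ l, X l : MvPolynomial (Fin 4) k) = X i + X j + ∑ l ∈ {i, j}ᶜ, X l := by
    rw [← Finset.sum_add_sum_compl {i, j}, Finset.sum_pair hij]
  have hidentity : ∑ l, X i * pderiv l E - (2 : k) • (X i * pderiv j E) -
      (2 : k) • ∑ l ∈ {i, j}ᶜ, X i * X j * X l = (2 : k) • (X i ^ 2 * X j) := by
    have hE := sum_pderiv_sum_emchMonomial_inr_sub (R := k) j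
    rw [hsum] at hE
    simp only [← Finset.mul_sum, ofNat_smul_eq_nsmul, nsmul_eq_mul, Nat.cast_ofNat]
    linear_combination X i * hE
  have hmem := V.smul_mem (2⁻¹ : k) (sub_mem hpderiv (V.smul_mem (2 : k) hsquarefree))
  rwa [hidentity, inv_smul_smul₀ h2] at hmem

theorem exists_homogeneousSubmodule_le_orbitTangentSpace (k : Type*) [Field k] :
    ∃ c : Fin 4 ⊕ Fin 4 → k, homogeneousSubmodule (Fin 4) k 3 ≤
      orbitTangentSpace (emchMonomial k) (∑ l, c l • emchMonomial k l) := by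
  by_cases h3 : (3 : k) = 0
  · have h2 : (2 : k) ≠ 0 := fun h2 => one_ne_zero (by linear_combination h3 - h2)
    exact ⟨Sum.elim 0 1, by
      simpa [Fintype.sum_sum_type] using homogeneousSubmodule_le_orbitTangentSpace_sum_inr h2⟩
  · exact ⟨Sum.elim 1 0, by
      simpa [Fintype.sum_sum_type] using homogeneousSubmodule_le_orbitTangentSpace_sum_inl h3⟩

end EmchTangentSpace

theorem exists_bind₁_diagonal_eq {k : Type*} [Field k] [IsAlgClosed k] {c : Fin 4 ⊕ Fin 4 → k}
    (hc : ∀ i, c (.inl i) ≠ 0) :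
    ∃ d a : Fin 4 → k, (∀ i, d i ≠ 0) ∧
      bind₁ (diagonal d).toMvPolynomial (∑ l, c l • emchMonomial k l) =
        ∑ i, emchMonomial k (.inl i) + ∑ i, C (a i) * emchMonomial k (.inr i) := by
  choose d hd using fun i => IsAlgClosed.exists_pow_nat_eq (c (.inl i))⁻¹ three_pos
  have hd0 (i : Fin 4) : d i ≠ 0 := fun h => hc i (by simpa [h, eq_comm] using hd i)
  refine ⟨d, fun i => c (.inr i) * ∏ j ∈ {i}ᶜ, d j, hd0, ?_⟩
  have hcube (i : Fin 4) :
      C (c (.inl i)) * (C (d i) * X i) ^ 3 = (X i ^ 3 : MvPolynomial (Fin 4) k) := by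
    rw [mul_pow, ← C_pow, hd, ← mul_assoc, ← C_mul, mul_inv_cancel₀ (hc i), C_1, one_mul]
  rw [Fintype.sum_sum_type]
  simp only [map_add, map_sum, emchMonomial_inl, emchMonomial_inr, map_pow, map_prod,
    bind₁_X_right, bind₁_C_right, toMvPolynomial_diagonal, hcube, Finset.prod_mul_distrib,
    smul_eq_C_mul, map_mul, mul_assoc]

/-- **Emch's normal form for a general cubic surface.**
Identifying cubic forms with their coefficient vectors (indexed by the 20
exponent vectors of total degree 3), there is a nonzero polynomial `P` on the
coefficient space such that every homogeneous cubic `F` on which `P` does not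
vanish can be brought, by an invertible linear change of variables and a
scaling, to the form `x₀³+x₁³+x₂³+x₃³ + Σ a_{ijl} xᵢxⱼx_l`. -/
theorem stmt14 {k : Type*} [Field k] [IsAlgClosed k] :
    ∃ P : MvPolynomial {m : Fin 4 →₀ ℕ // ∑ i, m i = 3} k, P ≠ 0 ∧
      ∀ F : MvPolynomial (Fin 4) k, F.IsHomogeneous 3 →
        eval (fun m : {m : Fin 4 →₀ ℕ // ∑ i, m i = 3} => F.coeff m.1) P ≠ 0 →
        ∃ (A : Matrix (Fin 4) (Fin 4) k) (lam : kˣ)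
          (a012 a013 a023 a123 : k), IsUnit A.det ∧
          (lam : k) • substMatrix A F =
            X 0 ^ 3 + X 1 ^ 3 + X 2 ^ 3 + X 3 ^ 3 +
            C a123 * (X 1 * X 2 * X 3) + C a023 * (X 0 * X 2 * X 3) +
            C a013 * (X 0 * X 1 * X 3) + C a012 * (X 0 * X 1 * X 2) := by
  obtain ⟨c₀, hc₀⟩ := exists_homogeneousSubmodule_le_orbitTangentSpace k
  have hcubes : ∏ i, (X (.inl i) : MvPolynomial (Fin 4 ⊕ Fin 4) k) ≠ 0 :=
    Finset.prod_ne_zero_iff.mpr fun i _ => X_ne_zero _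
  obtain ⟨P, hP, hPF⟩ := exists_forall_exists_bind₁_toMvPolynomial_eq_sum
    isHomogeneous_emchMonomial hc₀ hcubes
  refine ⟨P, hP, fun F hF hFP => ?_⟩
  obtain ⟨A, c, hA, hc, hAF⟩ := hPF F hF hFP
  simp only [map_prod, eval_X, Finset.prod_ne_zero_iff, Finset.mem_univ, true_imp_iff] at hc
  obtain ⟨d, a, hd, hda⟩ := exists_bind₁_diagonal_eq hc
  refine ⟨A * diagonal d, 1, a 3, a 2, a 1, a 0, ?_, ?_⟩
  · rw [det_mul, det_diagonal]
    exact hA.mul (Finset.prod_ne_zero_iff.mpr fun i _ => hd i).isUnit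
  · calc (1 : k) • substMatrix (A * diagonal d) F
        = bind₁ (diagonal d).toMvPolynomial (bind₁ A.toMvPolynomial F) := by
          rw [one_smul, substMatrix_eq_bind₁, bind₁_bind₁]
          simp only [← toMvPolynomial_mul]
      _ = ∑ i, emchMonomial k (.inl i) + ∑ i, C (a i) * emchMonomial k (.inr i) := by
          rw [hAF, hda]
      _ = _ := by
          rw [sum_mul_emchMonomial_inr, Fin.sum_univ_four]
          simp only [emchMonomial_inl, add_assoc]
end
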